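/- arXiv:2407.12713 — 3 statements merged into one kernel-verified Lean document; each statement's English description precedes it below -/
import Mathlib

section
/- Let q be a prime power, n ≥ 1, and let G = GU_n(q) be the group of isometries of a nondegenerate Hermitian form on F_{q^2}^n. Let η be a complex representation of G whose character satisfies χ^η(g) = (−1)^n·(−q)^{dim ker(g−1)} for all g ∈ G (the Weil representation of GU_n(q)). Let K be the tensor product Markov chain on Irr(G) associated to η, started at the trivial representation 𝟙, and let π be the Plancherel measure. Then for every positive integer c and r = n + c, one has ‖K^r_𝟙 − π‖_TV ≤ 0.7·q^{−c}. -/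
open CategoryTheory MonoidalCategory Finset

noncomputable section

/-- The multiplicity of the irreducible representation `ρ` in a finite-dimensional
representation `W`: the dimension of the space of `G`-equivariant maps `ρ ⟶ W`
(by Schur's lemma this equals the multiplicity of `ρ` in a decomposition of `W`
into irreducibles). -/
def multIn {G : Type} [Monoid G] (ρ W : FDRep ℂ G) : ℕ :=
  Module.finrank ℂ (ρ ⟶ W)

/-- The transition matrix of the tensor product Markov chain on (an index set `ι` for)
the irreducible representations of `G` associated with a fixed representation `η`:
`K(λ,ρ) = m_ρ(λ⊗η)·d_ρ/(d_λ·d_η)`. -/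
def tensorChain {G : Type} [Monoid G] {ι : Type} (rep : ι → FDRep ℂ G) (η : FDRep ℂ G) :
    Matrix ι ι ℝ := fun l r =>
  (multIn (rep r) (MonoidalCategory.tensorObj (rep l) η) * Module.finrank ℂ (rep r) : ℝ) /
    (Module.finrank ℂ (rep l) * Module.finrank ℂ η)

/-- The Plancherel measure `π(ρ) = d_ρ²/|G|` on the irreducible representations of `G`. -/
def plancherel {G : Type} [Monoid G] [Fintype G] {ι : Type} (rep : ι → FDRep ℂ G) (i : ι) :
    ℝ :=
  (Module.finrank ℂ (rep i) : ℝ) ^ 2 / (Fintype.card G : ℝ)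

/-- The total variation distance between two probability distributions on a finite set:
`‖P − Q‖_TV = (1/2)·Σ_x |P x − Q x|`. -/
def tvDist {X : Type*} [Fintype X] (P Q : X → ℝ) : ℝ :=
  (1 / 2) * ∑ x, |P x - Q x|

/-- The subgroup of `GL_m(E)` consisting of the invertible matrices preserving the
form `B` on `E^m`. -/
def formIsometry {E : Type} [Field E] {m : ℕ} (B : (Fin m → E) → (Fin m → E) → E) :
    Subgroup (Matrix (Fin m) (Fin m) E)ˣ where
  carrier := {g | ∀ x y, B ((g : Matrix (Fin m) (Fin m) E).mulVec x)
    ((g : Matrix (Fin m) (Fin m) E).mulVec y) = B x y}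
  one_mem' := by
    intro x y
    simp [Matrix.one_mulVec]
  mul_mem' := by
    intro a b ha hb x y
    simp only [Units.val_mul, ← Matrix.mulVec_mulVec]
    rw [ha, hb]
  inv_mem' := by
    intro g hg x y
    have := hg ((g⁻¹ : (Matrix (Fin m) (Fin m) E)ˣ).val.mulVec x)
      ((g⁻¹ : (Matrix (Fin m) (Fin m) E)ˣ).val.mulVec y)
    rw [Matrix.mulVec_mulVec, Matrix.mulVec_mulVec, ← Units.val_mul, mul_inv_cancel,
      Units.val_one, Matrix.one_mulVec, Matrix.one_mulVec] at this
    exact this.symm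

instance {E : Type} [Field E] [Fintype E] {m : ℕ}
    (B : (Fin m → E) → (Fin m → E) → E) : Fintype ↥(formIsometry B) :=
  Fintype.ofFinite _

/-- The dimension of the fixed space `ker(g−1)` of `g ∈ GL_m(E)` acting on `E^m`. -/
def fixdim {E : Type} [Field E] {m : ℕ} (g : (Matrix (Fin m) (Fin m) E)ˣ) : ℕ :=
  Module.finrank E (LinearMap.ker (Matrix.toLin' ((g : Matrix (Fin m) (Fin m) E) - 1)))


section Characters

open scoped ComplexConjugate ComplexOrder

variable {G : Type} [Group G] [Fintype G]

/-- A finite-dimensional complex representation of a finite group is unitarizable, so its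
character satisfies `χ(g⁻¹) = conj χ(g)`. -/
lemma FDRep.character_inv_eq_conj (V : FDRep ℂ G) (g : G) :
    V.character g⁻¹ = conj (V.character g) := by
  classical
  let b := Module.finBasis ℂ V
  let R : G → Matrix _ _ ℂ := fun g => LinearMap.toMatrix b b (V.ρ g)
  have hmul : ∀ g h, R (g * h) = R g * R h := fun g h => by
    simp only [R, map_mul, LinearMap.toMatrix_mul]
  have hone : R 1 = 1 := by simp [R]
  have htr : ∀ g, V.character g = (R g).trace := fun g => by
    simp only [R, FDRep.character, LinearMap.trace_eq_matrix_trace ℂ b]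
  let P := ∑ h, (R h).conjTranspose * R h
  have hP : P.PosDef := by
    have h1 : P = (R 1).conjTranspose * R 1 +
        ∑ h ∈ univ.erase (1 : G), (R h).conjTranspose * R h :=
      (Finset.add_sum_erase _ _ (mem_univ _)).symm
    rw [h1, hone, Matrix.conjTranspose_one, mul_one]
    exact Matrix.PosDef.one.add_posSemidef
      (Matrix.posSemidef_sum _ fun h _ => Matrix.posSemidef_conjTranspose_mul_self _)
  have hinv : (R g).conjTranspose * P * R g = P := by
    simp only [P, Finset.mul_sum, Finset.sum_mul]
    refine Fintype.sum_equiv (Equiv.mulRight g) _ _ fun h => ?_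
    simp [hmul, Matrix.conjTranspose_mul, Matrix.mul_assoc]
  have hu : IsUnit P.det := (Matrix.isUnit_iff_isUnit_det _).1 hP.isUnit
  have hgg : R g * R g⁻¹ = 1 := by rw [← hmul, mul_inv_cancel, hone]
  have key : (R g).conjTranspose = P * R g⁻¹ * P⁻¹ := by
    have h2 : (R g).conjTranspose * P = P * R g⁻¹ := by
      calc (R g).conjTranspose * P = (R g).conjTranspose * P * (R g * R g⁻¹) := by
            rw [hgg, mul_one]
        _ = P * R g⁻¹ := by rw [← mul_assoc, hinv]
    rw [← h2, Matrix.mul_assoc, Matrix.mul_nonsing_inv _ hu, mul_one]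
  rw [htr, htr, starRingEnd_apply, ← Matrix.trace_conjTranspose, key, Matrix.trace_mul_comm,
    ← Matrix.mul_assoc, Matrix.nonsing_inv_mul _ hu, one_mul]

omit [Fintype G] in
/-- Characters are additive along a direct sum decomposition given by inclusions and
projections. -/
lemma FDRep.character_eq_add {W Y Z : FDRep ℂ G} (i₁ : Y ⟶ W) (p₁ : W ⟶ Y) (i₂ : Z ⟶ W)
    (p₂ : W ⟶ Z) (h₁ : i₁ ≫ p₁ = 𝟙 Y) (h₂ : i₂ ≫ p₂ = 𝟙 Z)
    (h : p₁ ≫ i₁ + p₂ ≫ i₂ = 𝟙 W) : W.character = Y.character + Z.character := by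
  have tr : ∀ {X : FDRep ℂ G} (i : X ⟶ W) (p : W ⟶ X) (_ : i ≫ p = 𝟙 X) (g : G),
      LinearMap.trace ℂ W (p.hom.hom.hom.comp (W.ρ g) |> i.hom.hom.hom.comp) =
        X.character g := by
    intro X i p hip g
    have hp : p.hom.hom.hom.comp (W.ρ g) = (X.ρ g).comp p.hom.hom.hom :=
      congrArg (fun f => f.hom.hom) (p.comm g)
    have hi : p.hom.hom.hom.comp i.hom.hom.hom = LinearMap.id :=
      congrArg (fun f => f.hom.hom.hom) hip
    rw [LinearMap.trace_comp_comm', hp, LinearMap.comp_assoc, hi, LinearMap.comp_id]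
    rfl
  ext g
  have hid : i₁.hom.hom.hom.comp p₁.hom.hom.hom + i₂.hom.hom.hom.comp p₂.hom.hom.hom =
      LinearMap.id := congrArg (fun f => f.hom.hom.hom) h
  rw [Pi.add_apply, ← tr i₁ p₁ h₁, ← tr i₂ p₂ h₂, ← map_add, ← LinearMap.comp_assoc,
    ← LinearMap.comp_assoc, ← LinearMap.add_comp, hid]
  rfl

omit [Fintype G] in
lemma FDRep.id_eq_zero_of_finrank_eq_zero {V : FDRep ℂ G} (h : Module.finrank ℂ V = 0) :
    𝟙 V = 0 := by
  have : Subsingleton V := Module.finrank_zero_iff.1 h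
  ext x
  exact Subsingleton.elim (α := V) _ _

omit [Fintype G] in
lemma FDRep.finrank_pos_of_simple (V : FDRep ℂ G) [Simple V] : 0 < Module.finrank ℂ V :=
  Nat.pos_of_ne_zero fun h => id_nonzero V (FDRep.id_eq_zero_of_finrank_eq_zero h)

lemma FDRep.exists_decomposition (W : FDRep ℂ G) (h0 : Module.finrank ℂ W ≠ 0)
    (hW : ¬ Simple W) : ∃ Y Z : FDRep ℂ G, Module.finrank ℂ Y < Module.finrank ℂ W ∧
      Module.finrank ℂ Z < Module.finrank ℂ W ∧ W.character = Y.character + Z.character := by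
  obtain ⟨Y, f, hf, hf0, hiso⟩ : ∃ (Y : FDRep ℂ G) (f : Y ⟶ W), Mono f ∧ f ≠ 0 ∧ ¬ IsIso f := by
    by_contra! hcon
    refine hW ⟨fun {Y} f _ => ⟨fun hi hz => h0 ?_, fun hne => hcon Y f inferInstance hne⟩⟩
    have hid : 𝟙 W = 0 := (IsIso.inv_hom_id f).symm.trans <|
      (congrArg (inv f ≫ ·) hz).trans Limits.comp_zero
    have := congrArg (fun f => LinearMap.trace ℂ W f.hom.hom.hom) hid
    have h2 : (Module.finrank ℂ W : ℂ) = 0 := by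
      rw [← LinearMap.trace_id ℂ W]
      exact this.trans (map_zero _)
    exact_mod_cast h2
  let r : W ⟶ Y := Injective.factorThru (𝟙 Y) f
  have hr : f ≫ r = 𝟙 Y := Injective.comp_factorThru _ _
  let p : W ⟶ Limits.kernel r := Limits.kernel.lift r (𝟙 W - r ≫ f) (by simp [hr])
  have hp : p ≫ Limits.kernel.ι r = 𝟙 W - r ≫ f := Limits.kernel.lift_ι _ _ _
  have hsum : r ≫ f + p ≫ Limits.kernel.ι r = 𝟙 W := by rw [hp]; abel
  have hip : Limits.kernel.ι r ≫ p = 𝟙 _ := by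
    rw [← cancel_mono (Limits.kernel.ι r), Category.assoc, hp]
    simp
  have hχ := FDRep.character_eq_add f r (Limits.kernel.ι r) p hr hip hsum
  have hdim : Module.finrank ℂ W = Module.finrank ℂ Y +
      Module.finrank ℂ (Limits.kernel r : FDRep ℂ G) := by
    have := congrFun hχ 1
    simp only [Pi.add_apply, FDRep.char_one] at this
    exact_mod_cast this
  have hY : Module.finrank ℂ Y ≠ 0 := fun h => hf0 <| by
    rw [← Category.id_comp f, FDRep.id_eq_zero_of_finrank_eq_zero h, Limits.zero_comp]
  have hZ : Module.finrank ℂ (Limits.kernel r : FDRep ℂ G) ≠ 0 := fun h => hiso <| by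
    have hp0 : p = 0 := by
      rw [← Category.comp_id p, FDRep.id_eq_zero_of_finrank_eq_zero h, Limits.comp_zero]
    rw [hp0, Limits.zero_comp, add_zero] at hsum
    exact ⟨r, hr, hsum⟩
  exact ⟨Y, Limits.kernel r, by lia, by lia, hχ⟩

lemma multIn_eq_sum (ρ W : FDRep ℂ G) :
    (multIn ρ W : ℂ) = (Nat.card G : ℂ)⁻¹ * ∑ g, W.character g * ρ.character g⁻¹ := by
  have := invertibleOfNonzero (NeZero.ne (Nat.card G : ℂ))
  exact (FDRep.scalar_product_char_eq_finrank_equivariant ρ W).symm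

section Irr

variable {ι : Type} [Fintype ι] [DecidableEq ι] (rep : ι → FDRep ℂ G)
  (hsimple : ∀ i, Simple (rep i)) (hinj : ∀ i j : ι, Nonempty (rep i ≅ rep j) → i = j)

include hsimple hinj in
omit [Fintype ι] in
lemma sum_character_mul_character_inv (i j : ι) :
    (Nat.card G : ℂ)⁻¹ * ∑ g, (rep i).character g * (rep j).character g⁻¹ =
      if i = j then 1 else 0 := by
  have := invertibleOfNonzero (NeZero.ne (Nat.card G : ℂ))
  have := hsimple i
  have := hsimple j
  rw [FDRep.char_orthonormal]
  by_cases h : i = j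
  · subst h
    rw [if_pos ⟨Iso.refl _⟩, if_pos rfl]
  · rw [if_neg fun hn => h (hinj i j hn), if_neg h]

include hsimple hinj in
/-- Every character is the sum of the irreducible characters with their multiplicities. -/
lemma character_eq_sum_multIn
    (hcomplete : ∀ V : FDRep ℂ G, Simple V → ∃ i, Nonempty (V ≅ rep i)) (W : FDRep ℂ G) (g : G) :
    W.character g = ∑ i, (multIn (rep i) W : ℂ) * (rep i).character g := by
  suffices H : ∀ d (W : FDRep ℂ G), Module.finrank ℂ W = d → ∀ g,
      W.character g = ∑ i, (multIn (rep i) W : ℂ) * (rep i).character g from H _ W rfl g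
  intro d
  induction d using Nat.strong_induction_on with
  | _ d ih =>
    intro W hWd g
    by_cases h0 : Module.finrank ℂ W = 0
    · have : Subsingleton W := Module.finrank_zero_iff.1 h0
      have hz : ∀ g, W.character g = 0 := fun g => by
        have h1 : W.ρ g = 0 := LinearMap.ext fun x => Subsingleton.elim _ _
        rw [FDRep.character, h1, map_zero]
      simp [multIn_eq_sum, hz]
    by_cases hW : Simple W
    · obtain ⟨j, ⟨e⟩⟩ := hcomplete W hW
      have hχ := FDRep.char_iso e
      simp only [multIn_eq_sum, hχ, sum_character_mul_character_inv rep hsimple hinj]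
      simp
    · obtain ⟨Y, Z, hY, hZ, hχ⟩ := FDRep.exists_decomposition W h0 hW
      have e1 := ih _ (hWd ▸ hY) Y rfl g
      have e2 := ih _ (hWd ▸ hZ) Z rfl g
      rw [hχ, Pi.add_apply, e1, e2, ← Finset.sum_add_distrib]
      refine Finset.sum_congr rfl fun i _ => ?_
      simp only [multIn_eq_sum, hχ, Pi.add_apply, add_mul, Finset.sum_add_distrib, mul_add]

include hsimple hinj in
/-- The law of the tensor product chain after `r` steps, in terms of characters. -/
lemma tensorChain_pow_apply
    (hcomplete : ∀ V : FDRep ℂ G, Simple V → ∃ i, Nonempty (V ≅ rep i))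
    (triv : ι) (htriv : ∀ g, (rep triv).character g = 1) (η : FDRep ℂ G) (r : ℕ) (ρ : ι) :
    (((tensorChain rep η ^ r) triv ρ : ℝ) : ℂ) =
      (Module.finrank ℂ (rep ρ) : ℂ) / (Module.finrank ℂ η : ℂ) ^ r *
        ((Nat.card G : ℂ)⁻¹ * ∑ g, η.character g ^ r * (rep ρ).character g⁻¹) := by
  suffices H : ∃ W : FDRep ℂ G, (∀ g, W.character g = η.character g ^ r) ∧
      ∀ ρ, (((tensorChain rep η ^ r) triv ρ : ℝ) : ℂ) =
        (Module.finrank ℂ (rep ρ) : ℂ) / (Module.finrank ℂ η : ℂ) ^ r * multIn (rep ρ) W by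
    obtain ⟨W, hW, h⟩ := H
    rw [h, multIn_eq_sum]
    simp only [hW]
  induction r with
  | zero =>
    refine ⟨rep triv, by simp [htriv], fun ρ => ?_⟩
    rw [multIn_eq_sum, sum_character_mul_character_inv rep hsimple hinj, pow_zero,
      Matrix.one_apply]
    split_ifs with h
    · subst h
      rw [← FDRep.char_one, htriv]
      simp
    · simp
  | succ r ih =>
    obtain ⟨W, hW, h⟩ := ih
    refine ⟨W ⊗ η, fun g => by simp [hW, pow_succ], fun ρ => ?_⟩
    have hmult : (multIn (rep ρ) (W ⊗ η) : ℂ) =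
        ∑ l, (multIn (rep l) W : ℂ) * multIn (rep ρ) (rep l ⊗ η) := by
      rw [multIn_eq_sum]
      simp only [FDRep.char_tensor, Pi.mul_apply]
      simp only [character_eq_sum_multIn rep hsimple hinj hcomplete W,
        multIn_eq_sum (rep ρ), FDRep.char_tensor, Pi.mul_apply, Finset.sum_mul, Finset.mul_sum]
      rw [Finset.sum_comm]
      refine Finset.sum_congr rfl fun l _ => Finset.sum_congr rfl fun g _ => ?_
      ring
    rw [pow_succ, Matrix.mul_apply, hmult, Complex.ofReal_sum, Finset.mul_sum]
    refine Finset.sum_congr rfl fun l _ => ?_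
    have := hsimple l
    have hl : (Module.finrank ℂ (rep l) : ℂ) ≠ 0 := by
      exact_mod_cast (FDRep.finrank_pos_of_simple (rep l)).ne'
    rw [Complex.ofReal_mul, h, tensorChain]
    push_cast
    rw [pow_succ]
    field_simp

include hsimple hinj in
/-- Bessel's inequality for the irreducible characters. -/
lemma sum_norm_sq_sum_mul_character_le (f : G → ℂ) :
    ∑ i, ‖∑ g, f g * (rep i).character g⁻¹‖ ^ 2 ≤ Nat.card G * ∑ g, ‖f g‖ ^ 2 := by
  have hG : (0 : ℝ) < Nat.card G := by exact_mod_cast Nat.card_pos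
  let s : ℂ := ((Real.sqrt (Nat.card G))⁻¹ : ℝ)
  have hs : s * s = (Nat.card G : ℂ)⁻¹ := by
    simp only [s]
    rw [← Complex.ofReal_mul, ← mul_inv, Real.mul_self_sqrt hG.le]
    simp
  have hsc : conj s = s := Complex.conj_ofReal _
  let v : ι → EuclideanSpace ℂ G := fun i => WithLp.toLp 2 fun g => s * (rep i).character g
  have hv : Orthonormal ℂ v := by
    rw [orthonormal_iff_ite]
    intro i j
    rw [PiLp.inner_apply]
    have := sum_character_mul_character_inv rep hsimple hinj j i
    simp only [FDRep.character_inv_eq_conj] at this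
    simp only [v, RCLike.inner_apply, map_mul, hsc]
    simp only [eq_comm (a := i)]
    rw [← this, ← hs, Finset.mul_sum]
    exact Finset.sum_congr rfl fun g _ => by ring
  have hb := hv.sum_inner_products_le (WithLp.toLp 2 f) (s := univ)
  have hin : ∀ i, ‖inner ℂ (v i) (WithLp.toLp 2 f)‖ ^ 2 =
      (Nat.card G : ℝ)⁻¹ * ‖∑ g, f g * (rep i).character g⁻¹‖ ^ 2 := fun i => by
    have : inner ℂ (v i) (WithLp.toLp 2 f) = s * ∑ g, f g * (rep i).character g⁻¹ := by
      rw [PiLp.inner_apply, Finset.mul_sum]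
      simp only [v, RCLike.inner_apply, map_mul, hsc, FDRep.character_inv_eq_conj]
      exact Finset.sum_congr rfl fun g _ => by ring
    rw [this, norm_mul, mul_pow, pow_two ‖s‖, ← norm_mul, hs]
    simp
  simp only [hin, EuclideanSpace.norm_sq_eq] at hb
  rw [← Finset.mul_sum, inv_mul_le_iff₀ hG] at hb
  exact hb

include hsimple hinj in
/-- The upper bound lemma for tensor product chains. -/
lemma four_mul_tvDist_sq_le [DecidableEq G]
    (hcomplete : ∀ V : FDRep ℂ G, Simple V → ∃ i, Nonempty (V ≅ rep i))
    (triv : ι) (htriv : ∀ g, (rep triv).character g = 1) (η : FDRep ℂ G)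
    (hη : Module.finrank ℂ η ≠ 0) (r : ℕ) :
    4 * tvDist (fun ρ => (tensorChain rep η ^ r) triv ρ) (plancherel rep) ^ 2 ≤
      ∑ g ∈ univ.erase (1 : G), ‖η.character g / Module.finrank ℂ η‖ ^ (2 * r) := by
  have hG : (0 : ℝ) < Nat.card G := by exact_mod_cast Nat.card_pos
  have hηC : (Module.finrank ℂ η : ℂ) ≠ 0 := by exact_mod_cast hη
  let f : G → ℂ := fun g => if g = 1 then 0 else (η.character g / Module.finrank ℂ η) ^ r
  have habs : ∀ ρ, |(tensorChain rep η ^ r) triv ρ - plancherel rep ρ| =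
      Module.finrank ℂ (rep ρ) *
        ((Nat.card G : ℝ)⁻¹ * ‖∑ g, f g * (rep ρ).character g⁻¹‖) := fun ρ => by
    have : (((tensorChain rep η ^ r) triv ρ - plancherel rep ρ : ℝ) : ℂ) =
        Module.finrank ℂ (rep ρ) *
          ((Nat.card G : ℂ)⁻¹ * ∑ g, f g * (rep ρ).character g⁻¹) := by
      have h1 : ∑ g, f g * (rep ρ).character g⁻¹ =
          (∑ g, (η.character g / Module.finrank ℂ η) ^ r * (rep ρ).character g⁻¹) -
            Module.finrank ℂ (rep ρ) := by
        rw [← Finset.add_sum_erase _ _ (mem_univ (1 : G)),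
          ← Finset.add_sum_erase _ (fun g => (η.character g / _) ^ r * _) (mem_univ (1 : G))]
        have h2 : ∑ g ∈ univ.erase (1 : G), f g * (rep ρ).character g⁻¹ =
            ∑ g ∈ univ.erase (1 : G),
              (η.character g / Module.finrank ℂ η) ^ r * (rep ρ).character g⁻¹ :=
          Finset.sum_congr rfl fun g hg => by simp only [f, if_neg (Finset.ne_of_mem_erase hg)]
        rw [h2]
        simp [f, hηC]
      have h3 : ∑ g, (η.character g / Module.finrank ℂ η) ^ r * (rep ρ).character g⁻¹ =
          ((Module.finrank ℂ η : ℂ) ^ r)⁻¹ * ∑ g, η.character g ^ r * (rep ρ).character g⁻¹ := by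
        rw [Finset.mul_sum]
        exact Finset.sum_congr rfl fun g _ => by rw [div_pow]; ring
      rw [Complex.ofReal_sub, tensorChain_pow_apply rep hsimple hinj hcomplete triv htriv, h1, h3,
        plancherel, ← Nat.card_eq_fintype_card]
      push_cast
      ring
    rw [← Real.norm_eq_abs, ← Complex.norm_real, this]
    simp
  have hd : ∑ i, (Module.finrank ℂ (rep i) : ℝ) ^ 2 ≤ Nat.card G := by
    have := sum_norm_sq_sum_mul_character_le rep hsimple hinj (fun g => if g = 1 then 1 else 0)
    simpa [apply_ite (fun z : ℂ => ‖z‖ ^ 2)] using this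
  have hf : ∑ g, ‖f g‖ ^ 2 =
      ∑ g ∈ univ.erase (1 : G), ‖η.character g / Module.finrank ℂ η‖ ^ (2 * r) := by
    rw [← Finset.add_sum_erase _ _ (mem_univ (1 : G))]
    have h0 : f 1 = 0 := if_pos rfl
    rw [h0, norm_zero, zero_pow two_ne_zero, zero_add]
    refine Finset.sum_congr rfl fun g hg => ?_
    simp only [f, if_neg (Finset.ne_of_mem_erase hg)]
    rw [norm_pow, ← pow_mul, mul_comm]
  rw [← hf]
  have hb := sum_norm_sq_sum_mul_character_le rep hsimple hinj f
  have hcs := Finset.sum_mul_sq_le_sq_mul_sq univ (fun i => (Module.finrank ℂ (rep i) : ℝ))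
    (fun i => (Nat.card G : ℝ)⁻¹ * ‖∑ g, f g * (rep i).character g⁻¹‖)
  calc 4 * tvDist (fun ρ => (tensorChain rep η ^ r) triv ρ) (plancherel rep) ^ 2
      = (∑ i, (Module.finrank ℂ (rep i) : ℝ) *
          ((Nat.card G : ℝ)⁻¹ * ‖∑ g, f g * (rep i).character g⁻¹‖)) ^ 2 := by
        rw [tvDist]
        simp only [habs]
        ring
    _ ≤ _ := hcs
    _ ≤ Nat.card G * ∑ i, ((Nat.card G : ℝ)⁻¹ * ‖∑ g, f g * (rep i).character g⁻¹‖) ^ 2 := by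
        gcongr
    _ = (Nat.card G : ℝ)⁻¹ * ∑ i, ‖∑ g, f g * (rep i).character g⁻¹‖ ^ 2 := by
        simp only [mul_pow, ← Finset.mul_sum]
        field_simp
    _ ≤ _ := by rwa [inv_mul_le_iff₀ hG]

end Irr

end Characters

section Counting

variable {E : Type} [Field E] [Fintype E]

lemma card_add_pow_eq_le [DecidableEq E] {q : ℕ} (hq : 2 ≤ q) (c : E) :
    #{x : E | x + x ^ q = c} ≤ q := by
  open Polynomial in
  let p : E[X] := X ^ q + (X - C c)
  have hdeg : (X - C c : E[X]).degree < q := by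
    rw [degree_X_sub_C]
    exact_mod_cast hq
  have hp : p.natDegree = q := natDegree_eq_of_degree_eq_some <|
    (degree_add_eq_left_of_degree_lt (by rwa [degree_X_pow])).trans (degree_X_pow q)
  have hp0 : p ≠ 0 := (monic_X_pow_add hdeg).ne_zero
  calc #{x : E | x + x ^ q = c} ≤ #p.roots.toFinset := by
        refine Finset.card_le_card fun x hx => ?_
        rw [Multiset.mem_toFinset, Polynomial.mem_roots hp0]
        simp only [Finset.mem_filter, Finset.mem_univ, true_and] at hx
        simp [p, ← hx]
    _ ≤ p.roots.card := Multiset.toFinset_card_le _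
    _ ≤ q := hp ▸ p.card_roots'

/-- There are at most `q ^ (k ^ 2)` matrices `A` over `F_{q²}` with a prescribed value of
`A + A*`. -/
lemma card_matrix_add_conj_eq_le [DecidableEq E] {q : ℕ} (hq : 2 ≤ q)
    (hE : Fintype.card E = q ^ 2) (k : ℕ) (S : Fin k → Fin k → E) :
    #{A : Fin k → Fin k → E | ∀ i j, A i j + A j i ^ q = S i j} ≤ q ^ (k ^ 2) := by
  let T : Fin k × Fin k → Finset E := fun p =>
    if p.1 < p.2 then univ
    else if p.1 = p.2 then univ.filter (fun x : E => x + x ^ q = S p.1 p.2) else {0}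
  let t : Fin k × Fin k → ℕ := fun p => if p.1 < p.2 then q ^ 2 else if p.1 = p.2 then q else 1
  have hT : ∀ p, #(T p) ≤ t p := fun p => by
    simp only [T, t]
    split_ifs
    · rw [Finset.card_univ, hE]
    · exact card_add_pow_eq_le hq _
    · simp
  have ht : ∏ p, t p = q ^ (k ^ 2) := by
    refine Nat.pow_left_injective two_ne_zero ?_
    have h1 : ∏ p, t p = ∏ p : Fin k × Fin k, t p.swap :=
      (Fintype.prod_equiv (Equiv.prodComm _ _) _ _ fun _ => rfl).symm
    have h2 : ∀ p : Fin k × Fin k, t p * t p.swap = q ^ 2 := fun p => by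
      simp only [t, Prod.fst_swap, Prod.snd_swap]
      rcases lt_trichotomy p.1 p.2 with h | h | h
      · simp [h, h.not_gt, h.ne']
      · simp [h, pow_two]
      · simp [h, h.not_gt, h.ne']
    show (∏ p, t p) ^ 2 = (q ^ (k ^ 2)) ^ 2
    calc (∏ p, t p) ^ 2 = (∏ p, t p) * ∏ p : Fin k × Fin k, t p.swap := by rw [← h1, pow_two]
      _ = ∏ p : Fin k × Fin k, q ^ 2 := by rw [← Finset.prod_mul_distrib]; simp only [h2]
      _ = (q ^ (k ^ 2)) ^ 2 := by
        rw [Finset.prod_const, Finset.card_univ, Fintype.card_prod, Fintype.card_fin]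
        ring
  rw [← ht]
  refine le_trans ?_ (Finset.prod_le_prod' fun p _ => hT p)
  rw [← Fintype.card_piFinset]
  refine Finset.card_le_card_of_injOn
    (fun A p => if p.1 ≤ p.2 then A p.1 p.2 else 0) ?_ ?_
  · intro A hA
    simp only [Finset.coe_filter, Finset.mem_univ, true_and, Set.mem_ofPred_eq] at hA
    simp only [Fintype.coe_piFinset, Set.mem_pi, Set.mem_univ, Finset.mem_coe, true_implies]
    intro p
    simp only [T]
    rcases lt_trichotomy p.1 p.2 with h | h | h
    · simp [h]
    · simp only [h, lt_irrefl, if_false, if_true, le_refl, Finset.mem_filter, Finset.mem_univ,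
        true_and]
      exact hA _ _
    · simp [h.not_gt, h.ne', h.not_ge]
  · intro A hA A' hA' h
    simp only [Finset.coe_filter, Finset.mem_univ, true_and, Set.mem_ofPred_eq] at hA hA'
    have hle : ∀ i j, i ≤ j → A i j = A' i j := fun i j hij => by
      simpa [hij] using congrFun h (i, j)
    funext i j
    rcases le_total i j with hij | hij
    · exact hle i j hij
    · have h1 := hA i j
      rw [← hA' i j, hle j i hij] at h1
      exact add_right_cancel h1

/-- The operator `g - 1` on `E ^ n`. -/
def subOne {n : ℕ} (g : (Matrix (Fin n) (Fin n) E)ˣ) : (Fin n → E) →ₗ[E] (Fin n → E) :=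
  Matrix.toLin' ((g : Matrix (Fin n) (Fin n) E) - 1)

omit [Fintype E] in
lemma subOne_apply {n : ℕ} (g : (Matrix (Fin n) (Fin n) E)ˣ) (x : Fin n → E) :
    subOne g x = (g : Matrix (Fin n) (Fin n) E).mulVec x - x := by
  simp [subOne]

omit [Fintype E] in
lemma finrank_range_subOne_add_fixdim {n : ℕ} (g : (Matrix (Fin n) (Fin n) E)ˣ) :
    Module.finrank E (LinearMap.range (subOne g)) + fixdim g = n := by
  have := LinearMap.finrank_range_add_finrank_ker (subOne g)
  rwa [Module.finrank_fin_fun] at this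

lemma card_bases_ge {V : Type} [AddCommGroup V] [Module E V] [Fintype V]
    {k : ℕ} (W : Submodule E V) (hW : Module.finrank E W = k) (s : Finset (Fin k → V))
    (hs : ∀ w, LinearIndependent E w → Submodule.span E (Set.range w) = W → w ∈ s) :
    ∏ i : Fin k, (Fintype.card E ^ k - Fintype.card E ^ (i : ℕ)) ≤ #s := by
  have h := card_linearIndependent (K := E) (V := W) (k := k) hW.ge
  rw [hW] at h
  rw [← h, ← Fintype.card_coe s, ← Nat.card_eq_fintype_card]
  have hmem : ∀ u : {u : Fin k → W // LinearIndependent E u}, (fun i => (u.1 i : V)) ∈ s := by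
    intro u
    have hu : LinearIndependent E (fun i => (u.1 i : V)) :=
      u.2.map' W.subtype W.ker_subtype
    refine hs _ hu (Submodule.eq_of_le_of_finrank_eq ?_ ?_)
    · rw [Submodule.span_le]
      rintro _ ⟨i, rfl⟩
      exact (u.1 i).2
    · rw [finrank_span_eq_card hu, Fintype.card_fin, hW]
  exact Nat.card_le_card_of_injective (fun u => ⟨_, hmem u⟩) fun u u' h =>
    Subtype.ext <| funext fun i => Subtype.ext <| congrFun (congrArg Subtype.val h) i

section Form

variable {q n : ℕ} (B : (Fin n → E) → (Fin n → E) → E)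
  (hadd₁ : ∀ x x' y, B (x + x') y = B x y + B x' y)
  (hadd₂ : ∀ x y y', B x (y + y') = B x y + B x y')
  (hsmul₂ : ∀ (a : E) (x y : Fin n → E), B x (a • y) = a * B x y)
  (hconj : ∀ x y, B y x = (B x y) ^ q)
  (hnd : ∀ x, (∀ y, B x y = 0) → x = 0)

include hadd₁ hadd₂ hnd in
omit [Fintype E] in
/-- For an isometry `g`, the kernel of `g - 1` is the orthogonal complement of its range. -/
lemma subOne_eq_zero_iff {g : (Matrix (Fin n) (Fin n) E)ˣ} (hg : g ∈ formIsometry B)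
    (x : Fin n → E) : subOne g x = 0 ↔ ∀ v, B x (subOne g v) = 0 := by
  have hsub₁ : ∀ a b y, B (a - b) y = B a y - B b y := fun a b y => by
    rw [eq_sub_iff_add_eq, ← hadd₁, sub_add_cancel]
  have hsub₂ : ∀ y a b, B y (a - b) = B y a - B y b := fun y a b => by
    rw [eq_sub_iff_add_eq, ← hadd₂, sub_add_cancel]
  have key : ∀ v, B (subOne g x) ((g : Matrix (Fin n) (Fin n) E).mulVec v) =
      - B x (subOne g v) := fun v => by
    rw [subOne_apply, subOne_apply, hsub₁, hsub₂, hg x v]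
    ring
  constructor
  · intro h v
    have hz : B 0 ((g : Matrix (Fin n) (Fin n) E).mulVec v) = 0 := by
      simpa using hadd₁ 0 0 ((g : Matrix (Fin n) (Fin n) E).mulVec v)
    rw [← neg_eq_zero, ← key, h, hz]
  · intro h
    refine hnd _ fun y => ?_
    have hy : (g : Matrix (Fin n) (Fin n) E).mulVec
        (((g⁻¹ : (Matrix (Fin n) (Fin n) E)ˣ) : Matrix (Fin n) (Fin n) E).mulVec y) = y := by
      rw [Matrix.mulVec_mulVec, Units.mul_inv, Matrix.one_mulVec]
    rw [← hy, key, h, neg_zero]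

include hadd₁ hadd₂ hsmul₂ hconj hnd in
/-- The number of isometries `g` for which `w` is a basis of the range of `g - 1` is at most
`q ^ (k ^ 2)`: such `g` is determined by its Wall form. -/
lemma card_isometry_of_range_eq_le (hq : 2 ≤ q) (hE : Fintype.card E = q ^ 2) {k : ℕ}
    (w : Fin k → Fin n → E) (s : Finset (formIsometry B))
    (hs : ∀ g ∈ s, Submodule.span E (Set.range w) = LinearMap.range (subOne g.1)) :
    #s ≤ q ^ (k ^ 2) := by
  classical
  have hv : ∀ g : formIsometry B, ∃ v : Fin k → Fin n → E,
      g ∈ s → ∀ i, subOne g.1 (v i) = w i := by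
    intro g
    by_cases hg : g ∈ s
    · have : ∀ i, ∃ v, subOne g.1 v = w i := fun i =>
        LinearMap.mem_range.1 (hs g hg ▸ Submodule.subset_span ⟨i, rfl⟩)
      choose v hv using this
      exact ⟨v, fun _ => hv⟩
    · exact ⟨0, fun h => absurd h hg⟩
  choose v hv using hv
  refine le_trans ?_ (card_matrix_add_conj_eq_le hq hE k fun i j => - B (w i) (w j))
  refine Finset.card_le_card_of_injOn (fun g i j => B (v g i) (w j)) ?_ ?_
  · intro g hg
    simp only [Finset.coe_filter, Finset.mem_univ, true_and, Set.mem_ofPred_eq]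
    intro i j
    have hgv : ∀ i, (g.1 : Matrix (Fin n) (Fin n) E).mulVec (v g i) = v g i + w i := fun i => by
      rw [← hv g hg i, subOne_apply, add_sub_cancel]
    have := g.2 (v g i) (v g j)
    rw [hgv, hgv, hadd₁, hadd₂, hadd₂] at this
    rw [← hconj]
    linear_combination this
  · intro g hg g' hg' h
    have hzero : ∀ x, (∀ j, B x (w j) = 0) → ∀ y ∈ LinearMap.range (subOne g'.1), B x y = 0 := by
      intro x hx y hy
      let f : (Fin n → E) →ₗ[E] E :=
        { toFun := B x, map_add' := hadd₂ x, map_smul' := fun a y => hsmul₂ a x y }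
      have hle : Submodule.span E (Set.range w) ≤ LinearMap.ker f := by
        rw [Submodule.span_le]
        rintro _ ⟨j, rfl⟩
        exact hx j
      exact hle (hs g' hg' ▸ hy)
    have hv' : ∀ i, subOne g'.1 (v g i) = w i := fun i => by
      rw [← hv g' hg' i, ← sub_eq_zero, ← map_sub, subOne_eq_zero_iff B hadd₁ hadd₂ hnd g'.2]
      intro y
      refine hzero _ (fun j => ?_) _ ⟨y, rfl⟩
      have hij : B (v g i) (w j) = B (v g' i) (w j) := congrFun (congrFun h i) j
      have := hadd₁ (v g i - v g' i) (v g' i) (w j)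
      rw [sub_add_cancel, hij] at this
      exact right_eq_add.1 this
    have heq : ∀ x, subOne g.1 x = subOne g'.1 x := fun x => by
      have hx : subOne g.1 x ∈ Submodule.span E (Set.range w) := hs g hg ▸ ⟨x, rfl⟩
      obtain ⟨a, ha⟩ := (Submodule.mem_span_range_iff_exists_fun E).1 hx
      have h1 : subOne g.1 (x - ∑ i, a i • v g i) = 0 := by
        rw [map_sub, map_sum, ← ha, sub_eq_zero]
        exact Finset.sum_congr rfl fun i _ => by rw [map_smul, hv g hg]
      have h2 : subOne g'.1 (x - ∑ i, a i • v g i) = 0 := by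
        rw [subOne_eq_zero_iff B hadd₁ hadd₂ hnd g'.2]
        intro y
        have hy : subOne g'.1 y ∈ LinearMap.range (subOne g.1) :=
          hs g hg ▸ hs g' hg' ▸ ⟨y, rfl⟩
        obtain ⟨z, hz⟩ := hy
        rw [← hz]
        exact (subOne_eq_zero_iff B hadd₁ hadd₂ hnd g.2 _).1 h1 z
      rw [map_sub, map_sum, sub_eq_zero] at h2
      rw [h2, ← ha]
      exact Finset.sum_congr rfl fun i _ => by rw [map_smul, hv']
    have hmat : (g.1 : Matrix (Fin n) (Fin n) E) = g'.1 :=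
      sub_left_injective (Matrix.toLin'.injective (LinearMap.ext heq))
    exact Subtype.ext (Units.ext hmat)

include hadd₁ hadd₂ hsmul₂ hconj hnd in
lemma card_isometry_fixdim_mul_le (hq : 2 ≤ q) (hE : Fintype.card E = q ^ 2) (k : ℕ) :
    #{g : formIsometry B | fixdim g.1 + k = n} *
        ∏ i : Fin k, ((q ^ 2) ^ k - (q ^ 2) ^ (i : ℕ)) ≤
      (q ^ 2) ^ (n * k) * q ^ (k ^ 2) := by
  classical
  have hcard : #(univ : Finset (Fin k → Fin n → E)) = (q ^ 2) ^ (n * k) := by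
    simp [hE, pow_mul]
  rw [← hcard, ← hE]
  refine Finset.card_mul_le_card_mul (fun (g : formIsometry B) (w : Fin k → Fin n → E) =>
    LinearIndependent E w ∧ Submodule.span E (Set.range w) = LinearMap.range (subOne g.1))
    (fun g hg => ?_) fun w _ => ?_
  · refine card_bases_ge (LinearMap.range (subOne g.1)) ?_ _ fun w h1 h2 => ?_
    · have := finrank_range_subOne_add_fixdim g.1
      simp only [Finset.mem_filter, Finset.mem_univ, true_and] at hg
      lia
    · simp [Finset.bipartiteAbove, h1, h2]
  · refine card_isometry_of_range_eq_le B hadd₁ hadd₂ hsmul₂ hconj hnd hq hE w _ fun g hg => ?_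
    exact ((Finset.mem_bipartiteBelow _).1 hg).2.2

include hadd₁ hadd₂ hsmul₂ hconj hnd in
lemma card_isometry_fixdim_mul_pow_le (hq : 2 ≤ q) (hE : Fintype.card E = q ^ 2) {c : ℕ}
    (hc : 0 < c) {k : ℕ} (hk : 1 ≤ k) :
    (#{g : formIsometry B | fixdim g.1 + k = n} : ℝ) * ((q : ℝ)⁻¹ ^ k) ^ (2 * (n + c)) ≤
      4 * (1 / 6) ^ k * (q : ℝ)⁻¹ ^ (2 * c) := by
  have hq2 : (2 : ℝ) ≤ q := by exact_mod_cast hq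
  have hq0 : (0 : ℝ) < q := by linarith
  have hprod : ((q : ℝ) ^ (2 * k) * (3 / 4)) ^ k ≤
      ((∏ i : Fin k, ((q ^ 2) ^ k - (q ^ 2) ^ (i : ℕ)) : ℕ) : ℝ) := by
    have hcst : ((q : ℝ) ^ (2 * k) * (3 / 4)) ^ k =
        ∏ _i : Fin k, ((q : ℝ) ^ (2 * k) * (3 / 4)) := by simp
    rw [hcst, Nat.cast_prod]
    refine Finset.prod_le_prod (fun _ _ => by positivity) fun i _ => ?_
    rw [Nat.cast_sub (Nat.pow_le_pow_right (by positivity) i.2.le)]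
    push_cast
    have h1 : ((q : ℝ) ^ 2) ^ (i : ℕ) ≤ (q ^ 2) ^ (k - 1) :=
      pow_le_pow_right₀ (by nlinarith) (by have := i.2; lia)
    have h2 : ((q : ℝ) ^ 2) ^ k = (q ^ 2) ^ (k - 1) * q ^ 2 := by
      rw [← pow_succ]
      congr 1
      lia
    have h3 : (0 : ℝ) < (q ^ 2) ^ (k - 1) := by positivity
    have h4 : (4 : ℝ) ≤ q ^ 2 := by nlinarith
    rw [pow_mul]
    nlinarith [mul_le_mul_of_nonneg_left h4 h3.le]
  have hN := card_isometry_fixdim_mul_le B hadd₁ hadd₂ hsmul₂ hconj hnd hq hE k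
  set N := #{g : formIsometry B | fixdim g.1 + k = n}
  have hN' : (N : ℝ) * ((q : ℝ) ^ (2 * k) * (3 / 4)) ^ k ≤ (q ^ 2) ^ (n * k) * q ^ (k ^ 2) := by
    refine (mul_le_mul_of_nonneg_left hprod (Nat.cast_nonneg N)).trans ?_
    exact_mod_cast hN
  have hN'' : (N : ℝ) ≤ (4 / 3) ^ k * (q ^ (2 * n * k) * (q : ℝ)⁻¹ ^ (k ^ 2)) := by
    have hpos : (0 : ℝ) < ((q : ℝ) ^ (2 * k) * (3 / 4)) ^ k := by positivity
    refine ((le_div_iff₀ hpos).2 hN').trans_eq ?_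
    rw [div_eq_iff hpos.ne']
    have e1 : ((4 : ℝ) / 3) ^ k * (3 / 4) ^ k = 1 := by
      rw [← mul_pow]
      norm_num
    have e2 : (q : ℝ)⁻¹ ^ (k ^ 2) * q ^ (k ^ 2) = 1 := by
      rw [← mul_pow, inv_mul_cancel₀ hq0.ne', one_pow]
    calc ((q : ℝ) ^ 2) ^ (n * k) * q ^ (k ^ 2)
        = (((4 : ℝ) / 3) ^ k * (3 / 4) ^ k) * ((q : ℝ)⁻¹ ^ (k ^ 2) * q ^ (k ^ 2)) *
            (q ^ (2 * n * k) * q ^ (k ^ 2)) := by rw [e1, e2]; ring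
      _ = _ := by rw [mul_pow, ← pow_mul]; ring
  set p : ℝ := (q : ℝ)⁻¹
  have hp0 : 0 < p := by positivity
  have hp : p ≤ 1 / 2 := by
    rw [one_div]
    exact inv_anti₀ two_pos hq2
  have hpq : (q : ℝ) ^ (2 * n * k) * p ^ (2 * n * k) = 1 := by
    rw [← mul_pow, mul_inv_cancel₀ hq0.ne', one_pow]
  calc (N : ℝ) * (p ^ k) ^ (2 * (n + c))
      ≤ (4 / 3) ^ k * (q ^ (2 * n * k) * p ^ (k ^ 2)) * (p ^ k) ^ (2 * (n + c)) := by gcongr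
    _ = (4 / 3) ^ k * p ^ (k ^ 2) * p ^ (2 * c * k) *
          ((q : ℝ) ^ (2 * n * k) * p ^ (2 * n * k)) := by ring
    _ = (4 / 3) ^ k * p ^ (k ^ 2) * p ^ (2 * c * k) := by rw [hpq, mul_one]
    _ ≤ (4 / 3) ^ k * p ^ k * p ^ (2 * c + 2 * (k - 1)) := by
        have hp1 : p ≤ 1 := by linarith
        have l1 : p ^ (k ^ 2) ≤ p ^ k :=
          pow_le_pow_of_le_one hp0.le hp1 (by nlinarith)
        have l2 : p ^ (2 * c * k) ≤ p ^ (2 * c + 2 * (k - 1)) := by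
          refine pow_le_pow_of_le_one hp0.le hp1 ?_
          obtain ⟨m, rfl⟩ := Nat.exists_eq_add_of_le' hk
          rw [Nat.add_sub_cancel]
          nlinarith
        gcongr
    _ ≤ (4 / 3) ^ k * (1 / 2) ^ k * (p ^ (2 * c) * (1 / 2) ^ (2 * (k - 1))) := by
        rw [pow_add]
        gcongr
    _ = 4 * (1 / 6) ^ k * p ^ (2 * c) := by
        obtain ⟨m, rfl⟩ := Nat.exists_eq_add_of_le' hk
        have h6 : ((1 : ℝ) / 6) ^ (m + 1) =
            (4 / 3) ^ (m + 1) * (1 / 2) ^ (m + 1) * (1 / 4) ^ (m + 1) := by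
          rw [← mul_pow, ← mul_pow]
          norm_num
        rw [Nat.add_sub_cancel, h6, pow_mul (1 / 2 : ℝ) 2 m]
        norm_num
        ring

include hadd₁ hadd₂ hsmul₂ hconj hnd in
lemma sum_isometry_fixdim_le [DecidableEq (formIsometry B)] (hq : 2 ≤ q)
    (hE : Fintype.card E = q ^ 2) {c : ℕ} (hc : 0 < c) :
    ∑ g ∈ univ.erase (1 : formIsometry B), ((q : ℝ)⁻¹ ^ (n - fixdim g.1)) ^ (2 * (n + c)) ≤
      4 / 5 * (q : ℝ)⁻¹ ^ (2 * c) := by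
  have hle : ∀ g : formIsometry B, fixdim g.1 ≤ n := fun g => by
    have := finrank_range_subOne_add_fixdim g.1
    lia
  have hmaps : ∀ g ∈ univ.erase (1 : formIsometry B), n - fixdim g.1 ∈ Finset.Icc 1 n := by
    intro g hg
    rw [Finset.mem_Icc]
    refine ⟨?_, Nat.sub_le _ _⟩
    by_contra! hlt
    refine Finset.ne_of_mem_erase hg ?_
    have hr := finrank_range_subOne_add_fixdim g.1
    have hbot : LinearMap.range (subOne g.1) = ⊥ := Submodule.finrank_eq_zero.1 (by lia)
    have hz : subOne g.1 = 0 := LinearMap.range_eq_bot.1 hbot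
    exact Subtype.ext (Units.ext (sub_eq_zero.1 (Matrix.toLin'.map_eq_zero_iff.1 hz)))
  rw [← Finset.sum_fiberwise_of_maps_to hmaps]
  have hfib : ∀ k ∈ Finset.Icc 1 n,
      ∑ g ∈ univ.erase (1 : formIsometry B) with n - fixdim g.1 = k,
        ((q : ℝ)⁻¹ ^ (n - fixdim g.1)) ^ (2 * (n + c)) ≤
      4 * (1 / 6) ^ k * (q : ℝ)⁻¹ ^ (2 * c) := by
    intro k hk
    refine le_trans ?_ (card_isometry_fixdim_mul_pow_le B hadd₁ hadd₂ hsmul₂ hconj hnd hq hE hc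
      (Finset.mem_Icc.1 hk).1)
    rw [← nsmul_eq_mul]
    refine (Finset.sum_congr rfl (g := fun _ => ((q : ℝ)⁻¹ ^ k) ^ (2 * (n + c)))
      fun g hg => by rw [(Finset.mem_filter.1 hg).2]).trans_le ?_
    rw [Finset.sum_const]
    refine nsmul_le_nsmul_left (by positivity) (Finset.card_le_card fun g hg => ?_)
    have h1 := (Finset.mem_filter.1 hg).2
    have h2 := hle g
    simp only [Finset.mem_filter, Finset.mem_univ, true_and]
    lia
  refine (Finset.sum_le_sum hfib).trans ?_
  rw [← Finset.sum_mul, ← Finset.mul_sum]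
  gcongr
  have hgeom : ∀ n : ℕ, ∑ k ∈ Finset.Icc 1 n, ((1 : ℝ) / 6) ^ k = (1 - (1 / 6) ^ n) / 5 := by
    intro n
    induction n with
    | zero => simp
    | succ n ih =>
      rw [Finset.sum_Icc_succ_top (by lia), ih, pow_succ]
      ring
  rw [hgeom]
  have : (0 : ℝ) < (1 / 6) ^ n := by positivity
  linarith

end Form

end Counting

/-- **Theorem (upper bound for `GU_n(q)`).**  Let `E = F_{q²}`, let `B` be a nondegenerate
Hermitian form on `E^n` with isometry group `G = GU_n(q)`, and let `η` be a complex
representation of `G` whose character satisfies `χ^η(g) = (−1)^n·(−q)^{dim ker(g−1)}`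
(the Weil representation).  Let `K` be the tensor product Markov chain on `Irr(G)`
associated with `η`, started at the trivial representation, and `π` the Plancherel measure.
Then for every `c > 0` and `r = n + c`, `‖K^r_𝟙 − π‖_TV ≤ 0.7·q^{−c}`. -/
theorem gu_weil_upper_bound {E : Type} [Field E] [Fintype E]
    {q n : ℕ} (hq : Fintype.card E = q ^ 2) (hn : 1 ≤ n)
    (B : (Fin n → E) → (Fin n → E) → E)
    (hadd₁ : ∀ x x' y, B (x + x') y = B x y + B x' y)
    (hsmul₁ : ∀ (a : E) (x y : Fin n → E), B (a • x) y = a ^ q * B x y)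
    (hadd₂ : ∀ x y y', B x (y + y') = B x y + B x y')
    (hsmul₂ : ∀ (a : E) (x y : Fin n → E), B x (a • y) = a * B x y)
    (hconj : ∀ x y, B y x = (B x y) ^ q)
    (hnd : ∀ x, (∀ y, B x y = 0) → x = 0)
    {ι : Type} [Fintype ι] [DecidableEq ι]
    (rep : ι → FDRep ℂ ↥(formIsometry B))
    (hsimple : ∀ i, Simple (rep i))
    (hcomplete : ∀ V : FDRep ℂ ↥(formIsometry B), Simple V → ∃ i, Nonempty (V ≅ rep i))
    (hinj : ∀ i j : ι, Nonempty (rep i ≅ rep j) → i = j)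
    (triv : ι) (htriv : ∀ g : ↥(formIsometry B), (rep triv).character g = 1)
    (η : FDRep ℂ ↥(formIsometry B))
    (hη : ∀ g : ↥(formIsometry B),
      η.character g = (-1 : ℂ) ^ n * (-(q : ℂ)) ^ fixdim (g : (Matrix (Fin n) (Fin n) E)ˣ))
    (c : ℕ) (hc : 0 < c) :
    tvDist (fun ρ => (tensorChain rep η ^ (n + c)) triv ρ) (plancherel rep) ≤
      0.7 * (q : ℝ) ^ (-(c : ℤ)) := by
  classical
  have hq2 : 2 ≤ q := by
    have h1 : 1 < q ^ 2 := hq ▸ Fintype.one_lt_card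
    by_contra! h
    interval_cases q <;> simp at h1
  have hq0 : (0 : ℝ) < q := by exact_mod_cast (by lia : 0 < q)
  have hle : ∀ g : formIsometry B, fixdim g.1 ≤ n := fun g => by
    have := finrank_range_subOne_add_fixdim g.1
    lia
  have hdim : (Module.finrank ℂ η : ℂ) = (q : ℂ) ^ n := by
    have hfix : fixdim (1 : (Matrix (Fin n) (Fin n) E)ˣ) = n := by
      have h0 : subOne (1 : (Matrix (Fin n) (Fin n) E)ˣ) = 0 := by simp [subOne]
      have h := finrank_range_subOne_add_fixdim (1 : (Matrix (Fin n) (Fin n) E)ˣ)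
      rw [h0, LinearMap.range_zero, finrank_bot, zero_add] at h
      exact h
    rw [← FDRep.char_one, hη, OneMemClass.coe_one, hfix, ← mul_pow]
    simp
  have hnorm : ∀ g : formIsometry B, ‖η.character g / Module.finrank ℂ η‖ =
      (q : ℝ)⁻¹ ^ (n - fixdim g.1) := fun g => by
    rw [hη, hdim]
    simp only [norm_div, norm_mul, norm_pow, norm_neg, norm_one, one_pow, one_mul,
      Complex.norm_natCast]
    rw [inv_pow, div_eq_iff (by positivity), ← pow_sub_mul_pow _ (hle g),
      inv_mul_cancel_left₀ (by positivity)]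
  have hdim0 : Module.finrank ℂ η ≠ 0 := fun h => by
    rw [h, Nat.cast_zero, eq_comm, pow_eq_zero_iff (by lia), Nat.cast_eq_zero] at hdim
    lia
  have hub := four_mul_tvDist_sq_le rep hsimple hinj hcomplete triv htriv η hdim0 (n + c)
  simp only [hnorm] at hub
  have hsum := hub.trans (sum_isometry_fixdim_le B hadd₁ hadd₂ hsmul₂ hconj hnd hq2 hq hc)
  rw [zpow_neg, zpow_natCast, ← inv_pow]
  refine abs_le_of_sq_le_sq' ?_ (by positivity) |>.2
  have hpow : (q : ℝ)⁻¹ ^ (2 * c) = ((q : ℝ)⁻¹ ^ c) ^ 2 := by rw [mul_comm, pow_mul]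
  rw [hpow] at hsum
  nlinarith [sq_nonneg ((q : ℝ)⁻¹ ^ c)]
end
end

section
/- Let q be an odd prime power with q ≡ 3 (mod 4), n ≥ 1, and let G = Sp_{2n}(q) be the isometry group of a nondegenerate alternating bilinear form on F_q^{2n}. Let Tr ⊂ G denote the set of symplectic transvections, so |Tr| = q^{2n} − 1. Let η be a finite-dimensional complex representation of G with character χ^η and dimension d_η, and let K be the tensor product Markov chain on Irr(G) associated to η, started at the trivial representation 𝟙. Define f_* on Irr(G) by f_*(ρ) = (Σ_{t∈Tr} χ^ρ(t)) / (d_ρ · √(q^{2n}−1)). Then for all integers r ≥ 0 and s ≥ 0, E_{K^r}[(f_*)^s] = (q^{2n}−1)^{s/2} · (q^{2n}−1)^{−s} · Σ_{(t_1,…,t_s)∈Tr^s} (χ^η(t_1⋯t_s)/d_η)^r; equivalently, E_{K^r}[(f_*)^s] = (q^{2n}−1)^{s/2}·Σ_T p_s(T)·(χ^η(T)/d_η)^r, where T ranges over the conjugacy classes of G and p_s(T) is the probability that the product of s independent uniformly random transvections lies in T. (Since the two conjugacy classes C_1, C_2 = C_1^{−1} of transvections each have size (q^{2n}−1)/2,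 f_*(ρ) agrees with (|C_1|^{1/2}χ^ρ(C_1) + |C_2|^{1/2}χ^ρ(C_2))/(√2·d_ρ).) -/
open CategoryTheory MonoidalCategory Finset

noncomputable section

/-- `g` is a symplectic transvection with respect to the alternating form `B`:
`g : x ↦ x + α(v|x)v` for some `α ∈ F^×` and `0 ≠ v`. -/
def IsSympTransvection {F : Type} [Field F] {m : ℕ}
    (B : (Fin m → F) → (Fin m → F) → F) (g : (Matrix (Fin m) (Fin m) F)ˣ) : Prop :=
  ∃ α : F, α ≠ 0 ∧ ∃ v : Fin m → F, v ≠ 0 ∧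
    ∀ x, (g : Matrix (Fin m) (Fin m) F).mulVec x = x + (α * B v x) • v

/-- A split idempotent decomposition of the identity of `W` decomposes its character. -/
theorem FDRep.character_eq_add_of_split {G : Type} [Monoid G] {A C W : FDRep ℂ G}
    (f : A ⟶ W) (r : W ⟶ A) (i : C ⟶ W) (p : W ⟶ C)
    (hfr : f ≫ r = 𝟙 A) (hip : i ≫ p = 𝟙 C) (hsum : r ≫ f + p ≫ i = 𝟙 W) (g : G) :
    W.character g = A.character g + C.character g := by
  have key : ∀ {X : FDRep ℂ G} (a : X ⟶ W) (b : W ⟶ X), a ≫ b = 𝟙 X →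
      LinearMap.trace ℂ W (W.ρ g * (a.hom.hom.hom ∘ₗ b.hom.hom.hom)) = X.character g := by
    intro X a b hab
    have hcomm : W.ρ g ∘ₗ a.hom.hom.hom = a.hom.hom.hom ∘ₗ X.ρ g :=
      (congrArg (fun h => h.hom.hom) (a.comm g)).symm
    have hid : b.hom.hom.hom ∘ₗ a.hom.hom.hom = LinearMap.id :=
      congrArg (fun h => h.hom.hom.hom) hab
    rw [Module.End.mul_eq_comp, ← LinearMap.comp_assoc, hcomm, LinearMap.trace_comp_comm',
      ← LinearMap.comp_assoc, hid, LinearMap.id_comp]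
    rfl
  have hone : f.hom.hom.hom ∘ₗ r.hom.hom.hom + i.hom.hom.hom ∘ₗ p.hom.hom.hom =
      (1 : W →ₗ[ℂ] W) := congrArg (fun h => h.hom.hom.hom) hsum
  rw [← key f r hfr, ← key i p hip, ← map_add, ← mul_add, hone, mul_one]
  rfl

theorem FDRep.hom_eq_zero_of_finrank_source {G : Type} [Monoid G] {A W : FDRep ℂ G}
    (hA : Module.finrank ℂ A = 0) (f : A ⟶ W) : f = 0 := by
  have := Module.finrank_zero_iff.mp hA
  ext x
  rw [Subsingleton.elim x 0, map_zero, map_zero]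

theorem FDRep.finrank_cast_ne_zero_of_simple {G : Type} [Monoid G] (V : FDRep ℂ G) [Simple V] :
    (Module.finrank ℂ V : ℂ) ≠ 0 := fun h =>
  id_nonzero V (FDRep.hom_eq_zero_of_finrank_source (by exact_mod_cast h) _)

/-- Complete reducibility at the level of characters. -/
theorem FDRep.character_eq_sum_finrank_hom {G : Type} [Group G] [Fintype G]
    {ι : Type} [Fintype ι] [DecidableEq ι] (rep : ι → FDRep ℂ G)
    (hsimple : ∀ i, Simple (rep i))
    (hcomplete : ∀ V : FDRep ℂ G, Simple V → ∃ i, Nonempty (V ≅ rep i))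
    (hinj : ∀ i j : ι, Nonempty (rep i ≅ rep j) → i = j) (W : FDRep ℂ G) (g : G) :
    W.character g = ∑ i, (Module.finrank ℂ (rep i ⟶ W) : ℂ) * (rep i).character g := by
  classical
  have : Invertible (Nat.card G : ℂ) := invertibleOfNonzero (NeZero.ne _)
  induction hN : Module.finrank ℂ W using Nat.strong_induction_on generalizing W with
  | _ N ih =>
  subst hN
  by_cases hW : Simple W
  · obtain ⟨j, ⟨e⟩⟩ := hcomplete W hW
    have hmult : ∀ i, Module.finrank ℂ (rep i ⟶ W) = if i = j then 1 else 0 := by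
      intro i
      rw [FDRep.finrank_hom_simple_simple]
      refine if_congr ⟨fun ⟨h⟩ => hinj i j ⟨h ≪≫ e⟩, ?_⟩ rfl rfl
      rintro rfl
      exact ⟨e.symm⟩
    simp [hmult, FDRep.char_iso e]
  by_cases h0 : Module.finrank ℂ W = 0
  · have hsub := Module.finrank_zero_iff.mp h0
    have hchar : ∀ g, W.character g = 0 := fun g => by
      rw [FDRep.character, Subsingleton.elim (W.ρ g) 0, map_zero]
    simp [← FDRep.scalar_product_char_eq_finrank_equivariant, hchar]
  obtain ⟨A, f, hmono, hf0, hiso⟩ :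
      ∃ (A : FDRep ℂ G) (f : A ⟶ W), Mono f ∧ f ≠ 0 ∧ ¬ IsIso f := by
    by_contra! hcon
    refine hW ⟨fun {A} f hf => ⟨fun hi hz => h0 ?_, fun h => hcon A f hf h⟩⟩
    subst hz
    have hid : 𝟙 W = 0 := by rw [← IsIso.inv_hom_id (0 : A ⟶ W), Limits.comp_zero]
    have hone : (1 : W →ₗ[ℂ] W) = 0 := congrArg (fun h => h.hom.hom.hom) hid
    have htr := congrArg (LinearMap.trace ℂ W) hone
    rw [LinearMap.trace_one, map_zero] at htr
    exact_mod_cast htr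
  obtain ⟨r, hr⟩ : ∃ r : W ⟶ A, f ≫ r = 𝟙 A :=
    ⟨Injective.factorThru (𝟙 A) f, Injective.comp_factorThru _ _⟩
  let i := Limits.kernel.ι r
  let p : W ⟶ Limits.kernel r := Limits.kernel.lift r (𝟙 W - r ≫ f) (by simp [hr])
  have hpi : p ≫ i = 𝟙 W - r ≫ f := Limits.kernel.lift_ι _ _ _
  have hip : i ≫ p = 𝟙 _ := by
    rw [← cancel_mono i, Category.assoc, hpi]
    simp [i]
  have hsum : r ≫ f + p ≫ i = 𝟙 W := by rw [hpi]; abel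
  have hadd := FDRep.character_eq_add_of_split f r i p hr hip hsum
  have hdim : Module.finrank ℂ W = Module.finrank ℂ A + Module.finrank ℂ ((Limits.kernel r : FDRep ℂ G)) := by
    have := hadd 1
    simp only [FDRep.char_one] at this
    exact_mod_cast this
  have hA : Module.finrank ℂ A ≠ 0 := fun h =>
    hf0 (FDRep.hom_eq_zero_of_finrank_source h f)
  have hC : Module.finrank ℂ ((Limits.kernel r : FDRep ℂ G)) ≠ 0 := fun h => hiso
    ⟨r, hr, by rw [← hsum, FDRep.hom_eq_zero_of_finrank_source h i, Limits.comp_zero, add_zero]⟩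
  rw [hadd, ih _ (by omega) A rfl, ih _ (by omega) (Limits.kernel r) rfl, ← sum_add_distrib]
  refine sum_congr rfl fun j _ => ?_
  rw [← add_mul]
  congr 1
  simp only [← FDRep.scalar_product_char_eq_finrank_equivariant, hadd, add_mul,
    sum_add_distrib, mul_add]

/-- Schur's lemma: a conjugation-invariant sum acts on a simple representation as a scalar. -/
theorem FDRep.sum_ρ_eq_smul_one {G : Type} [Group G] (V : FDRep ℂ G) [Simple V]
    (T : Finset G) (hT : ∀ g, ∀ t ∈ T, g * t * g⁻¹ ∈ T) :
    ∑ t ∈ T, V.ρ t =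
      ((∑ t ∈ T, V.character t) / (Module.finrank ℂ V : ℂ)) • (1 : V →ₗ[ℂ] V) := by
  have hcomm : ∀ g, (∑ t ∈ T, V.ρ t) ∘ₗ V.ρ g = V.ρ g ∘ₗ ∑ t ∈ T, V.ρ t := by
    intro g
    simp only [← Module.End.mul_eq_comp, sum_mul, mul_sum, ← map_mul]
    refine sum_nbij' (fun t => g⁻¹ * t * g) (fun t => g * t * g⁻¹) ?_ (hT g) ?_ ?_ ?_
    · intro t ht
      simpa using hT g⁻¹ t ht
    all_goals intros; simp [mul_assoc]
  let z : V ⟶ V := ⟨InducedCategory.homMk (ModuleCat.ofHom (∑ t ∈ T, V.ρ t)), fun g => by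
    ext x
    exact LinearMap.congr_fun (hcomm g) x⟩
  obtain ⟨c, hc⟩ := endomorphism_simple_eq_smul_id ℂ z
  have hz : c • (1 : V →ₗ[ℂ] V) = ∑ t ∈ T, V.ρ t := congrArg (fun h => h.hom.hom.hom) hc
  have hd := FDRep.finrank_cast_ne_zero_of_simple V
  have htr := congrArg (LinearMap.trace ℂ V) hz
  rw [map_smul, LinearMap.trace_one, map_sum, smul_eq_mul] at htr
  rw [← hz]
  congr 1
  exact (eq_div_iff hd).mpr htr

theorem Finset.sum_pow_eq_sum_piFinset_prod_ofFn {G R : Type*} [Semiring R] (T : Finset G)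
    (f : G → R) (s : ℕ) :
    (∑ t ∈ T, f t) ^ s =
      ∑ t ∈ Fintype.piFinset (fun _ : Fin s => T), (List.ofFn fun i => f (t i)).prod := by
  induction s with
  | zero => simp
  | succ s ih =>
    rw [pow_succ', ih, sum_mul_sum, ← sum_product']
    refine sum_nbij' (fun p => Fin.cons p.1 p.2) (fun t => (t 0, Fin.tail t)) ?_ ?_ ?_ ?_ ?_
    · rintro ⟨a, t⟩ h
      simp only [mem_product, Fintype.mem_piFinset] at h ⊢
      exact Fin.cases h.1 h.2
    · intro t h
      simp only [mem_product, Fintype.mem_piFinset] at h ⊢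
      exact ⟨h 0, fun i => h i.succ⟩
    · simp
    · simp
    · simp [List.ofFn_succ]

theorem FDRep.sum_character_div_pow {G : Type} [Group G] (V : FDRep ℂ G) [Simple V]
    (T : Finset G) (hT : ∀ g, ∀ t ∈ T, g * t * g⁻¹ ∈ T) (s : ℕ) :
    ((∑ t ∈ T, V.character t) / (Module.finrank ℂ V : ℂ)) ^ s =
      ∑ t ∈ Fintype.piFinset (fun _ : Fin s => T),
        V.character (List.ofFn t).prod / (Module.finrank ℂ V : ℂ) := by
  have hd := FDRep.finrank_cast_ne_zero_of_simple V
  have h := congrArg (LinearMap.trace ℂ V) (congrArg (· ^ s) (FDRep.sum_ρ_eq_smul_one V T hT))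
  simp only [smul_pow, one_pow, map_smul, LinearMap.trace_one, smul_eq_mul,
    sum_pow_eq_sum_piFinset_prod_ofFn, map_sum] at h
  rw [← sum_div, eq_div_iff hd, ← h]
  refine sum_congr rfl fun t _ => ?_
  rw [FDRep.character, map_list_prod V.ρ, List.map_ofFn]
  rfl

/-- The normalized characters are eigenfunctions of the tensor product chain. -/
theorem sum_tensorChain_pow_mul_character {G : Type} [Group G] [Fintype G]
    {ι : Type} [Fintype ι] [DecidableEq ι] (rep : ι → FDRep ℂ G)
    (hsimple : ∀ i, Simple (rep i))
    (hcomplete : ∀ V : FDRep ℂ G, Simple V → ∃ i, Nonempty (V ≅ rep i))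
    (hinj : ∀ i j : ι, Nonempty (rep i ≅ rep j) → i = j) (η : FDRep ℂ G) (g : G)
    (r : ℕ) (l : ι) :
    ∑ i, ((tensorChain rep η ^ r) l i : ℂ) *
        ((rep i).character g / (Module.finrank ℂ (rep i) : ℂ)) =
      (rep l).character g / (Module.finrank ℂ (rep l) : ℂ) *
        (η.character g / (Module.finrank ℂ η : ℂ)) ^ r := by
  have step : ∀ l, ∑ i, (tensorChain rep η l i : ℂ) *
        ((rep i).character g / (Module.finrank ℂ (rep i) : ℂ)) =
      (rep l).character g / (Module.finrank ℂ (rep l) : ℂ) *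
        (η.character g / (Module.finrank ℂ η : ℂ)) := by
    intro l
    have hchar := FDRep.character_eq_sum_finrank_hom rep hsimple hcomplete hinj (rep l ⊗ η) g
    rw [FDRep.char_tensor, Pi.mul_apply] at hchar
    rw [div_mul_div_comm, hchar, sum_div]
    refine sum_congr rfl fun i _ => ?_
    have := FDRep.finrank_cast_ne_zero_of_simple (rep i)
    simp only [tensorChain, multIn]
    push_cast
    field_simp
  induction r with
  | zero => simp [Matrix.one_apply, apply_ite Complex.ofReal]
  | succ r ih =>
    simp only [pow_succ, Matrix.mul_apply]
    push_cast
    simp only [sum_mul]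
    rw [sum_comm]
    simp only [mul_assoc, ← mul_sum, step]
    simp only [← mul_assoc, ← sum_mul, ih]

section Transvections

variable {F : Type} [Field F] {m : ℕ} {B : (Fin m → F) → (Fin m → F) → F}

theorem exists_formIsometry_transvection
    (hadd₁ : ∀ x x' y, B (x + x') y = B x y + B x' y)
    (hsmul₁ : ∀ (a : F) (x y : Fin m → F), B (a • x) y = a * B x y)
    (hadd₂ : ∀ x y y', B x (y + y') = B x y + B x y')
    (hsmul₂ : ∀ (a : F) (x y : Fin m → F), B x (a • y) = a * B x y)
    (halt : ∀ x, B x x = 0) (α : F) (v : Fin m → F) :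
    ∃ g : formIsometry B, ∀ x,
      ((g : (Matrix (Fin m) (Fin m) F)ˣ) : Matrix (Fin m) (Fin m) F).mulVec x =
        x + (α * B v x) • v := by
  let L (a : F) : (Fin m → F) →ₗ[F] (Fin m → F) :=
    { toFun := fun x => x + (a * B v x) • v
      map_add' := fun x y => by rw [hadd₂]; module
      map_smul' := fun c x => by rw [hsmul₂, RingHom.id_apply]; module }
  have hL : ∀ a x, L a x = x + (a * B v x) • v := fun _ _ => rfl
  have hmul : ∀ a b, a + b = 0 → L a * L b = 1 := by
    intro a b hab
    refine LinearMap.ext fun x => ?_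
    rw [Module.End.mul_apply, hL, hL, hadd₂, hsmul₂, halt, Module.End.one_apply,
      eq_neg_of_add_eq_zero_left hab]
    module
  have hskew : ∀ x y, B x y = -B y x := by
    intro x y
    have h := halt (x + y)
    rw [hadd₁, hadd₂, hadd₂, halt, halt] at h
    linear_combination h
  have hmat : ∀ a b, a + b = 0 → LinearMap.toMatrix' (L a) * LinearMap.toMatrix' (L b) = 1 := by
    intro a b hab
    rw [← LinearMap.toMatrix'_mul, hmul a b hab, LinearMap.toMatrix'_one]
  refine ⟨⟨⟨LinearMap.toMatrix' (L α), LinearMap.toMatrix' (L (-α)), hmat _ _ (by ring),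
    hmat _ _ (by ring)⟩, fun x y => ?_⟩, fun x => LinearMap.toMatrix'_mulVec _ _⟩
  simp only [LinearMap.toMatrix'_mulVec, hL, hadd₁, hadd₂, hsmul₁, hsmul₂, halt]
  rw [hskew x v]
  ring

theorem formIsometry_ext {g h : formIsometry B}
    (hgh : ∀ x, ((g : (Matrix (Fin m) (Fin m) F)ˣ) : Matrix (Fin m) (Fin m) F).mulVec x =
      ((h : (Matrix (Fin m) (Fin m) F)ˣ) : Matrix (Fin m) (Fin m) F).mulVec x) : g = h :=
  Subtype.ext (Units.ext (Matrix.mulVec_injective (funext hgh)))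

theorem transvection_parameters_unique
    (hsmul₁ : ∀ (a : F) (x y : Fin m → F), B (a • x) y = a * B x y)
    (hnd : ∀ x, (∀ y, B x y = 0) → x = 0) {α β : F} {v w : Fin m → F}
    (hβ : β ≠ 0) (hv : v ≠ 0) (hw : w ≠ 0)
    (h : ∀ x, x + (α * B v x) • v = x + (β * B w x) • w) :
    ∃ c : Fˣ, w = (c : F) • v ∧ α = β * (c : F) ^ 2 := by
  have hex : ∀ u : Fin m → F, u ≠ 0 → ∃ x, B u x ≠ 0 := fun u hu => by
    by_contra! hcon
    exact hu (hnd u hcon)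
  obtain ⟨x, hx⟩ := hex w hw
  obtain ⟨c, rfl⟩ : ∃ c : F, w = c • v := by
    refine ⟨(β * B w x)⁻¹ * (α * B v x), ?_⟩
    rw [mul_smul, add_left_cancel (h x), inv_smul_smul₀ (mul_ne_zero hβ hx)]
  have hc : c ≠ 0 := by
    rintro rfl
    exact hw (zero_smul _ _)
  obtain ⟨y, hy⟩ := hex v hv
  refine ⟨Units.mk0 c hc, rfl, ?_⟩
  have hy' := add_left_cancel (h y)
  rw [smul_smul, hsmul₁] at hy'
  refine mul_right_cancel₀ hy ((smul_left_injective F hv hy').trans ?_)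
  simp only [Units.val_mk0]
  ring

theorem IsSympTransvection.conj (g : formIsometry B)
    {t : formIsometry B} (ht : IsSympTransvection B (t : (Matrix (Fin m) (Fin m) F)ˣ)) :
    IsSympTransvection B ((g * t * g⁻¹ : formIsometry B) : (Matrix (Fin m) (Fin m) F)ˣ) := by
  obtain ⟨α, hα, v, hv, h⟩ := ht
  obtain ⟨g, hg⟩ := g
  have hinv : ∀ x, (g : Matrix (Fin m) (Fin m) F).mulVec
      ((g⁻¹ : (Matrix (Fin m) (Fin m) F)ˣ).val.mulVec x) = x := fun x => by
    rw [Matrix.mulVec_mulVec, Units.mul_inv, Matrix.one_mulVec]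
  have hinv' : ∀ x, (g⁻¹ : (Matrix (Fin m) (Fin m) F)ˣ).val.mulVec
      ((g : Matrix (Fin m) (Fin m) F).mulVec x) = x := fun x => by
    rw [Matrix.mulVec_mulVec, Units.inv_mul, Matrix.one_mulVec]
  refine ⟨α, hα, (g : Matrix (Fin m) (Fin m) F).mulVec v, fun h0 => hv ?_, fun x => ?_⟩
  · rw [← hinv' v, h0, Matrix.mulVec_zero]
  · have hB := hg v ((g⁻¹ : (Matrix (Fin m) (Fin m) F)ˣ).val.mulVec x)
    rw [hinv] at hB
    simp only [Subgroup.coe_mul, Subgroup.coe_inv, Units.val_mul, ← Matrix.mulVec_mulVec]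
    rw [h, Matrix.mulVec_add, Matrix.mulVec_smul, hinv, hB]

theorem card_sympTransvections [Fintype F]
    (hadd₁ : ∀ x x' y, B (x + x') y = B x y + B x' y)
    (hsmul₁ : ∀ (a : F) (x y : Fin m → F), B (a • x) y = a * B x y)
    (hadd₂ : ∀ x y y', B x (y + y') = B x y + B x y')
    (hsmul₂ : ∀ (a : F) (x y : Fin m → F), B x (a • y) = a * B x y)
    (halt : ∀ x, B x x = 0) (hnd : ∀ x, (∀ y, B x y = 0) → x = 0)
    (T : Finset (formIsometry B))
    (hT : ∀ g : formIsometry B, g ∈ T ↔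
      IsSympTransvection B (g : (Matrix (Fin m) (Fin m) F)ˣ)) :
    T.card = Fintype.card F ^ m - 1 := by
  classical
  choose a ha v hv h using fun t : T => (hT t).mp t.2
  let φ : T × Fˣ → Fˣ × {w : Fin m → F // w ≠ 0} := fun p =>
    (Units.mk0 (a p.1) (ha p.1) * (p.2 ^ 2)⁻¹,
      ⟨(p.2 : F) • v p.1, smul_ne_zero p.2.ne_zero (hv p.1)⟩)
  have hφ : ∀ p x, (a p.1 * B (v p.1) x) • v p.1 =
      (((φ p).1 : F) * B (φ p).2 x) • ((φ p).2 : Fin m → F) := by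
    rintro ⟨t, c⟩ x
    simp only [φ, hsmul₁, smul_smul, Units.val_mul, Units.val_mk0, Units.val_inv_eq_inv_val,
      Units.val_pow_eq_pow_val]
    congr 1
    have := c.ne_zero
    field_simp
  have hbij : Function.Bijective φ := by
    constructor
    · rintro ⟨t, c⟩ ⟨t', c'⟩ heq
      obtain rfl : t = t' := Subtype.ext (formIsometry_ext fun x => by
        rw [h, h, hφ (t, c), hφ (t', c'), heq])
      have hc : (c : F) • v t = (c' : F) • v t := congrArg (fun p => (p.2 : Fin m → F)) heq
      rw [Units.ext (smul_left_injective F (hv t) hc)]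
    · rintro ⟨β, w, hw⟩
      obtain ⟨g, hg⟩ := exists_formIsometry_transvection hadd₁ hsmul₁ hadd₂ hsmul₂ halt (β : F) w
      let t : T := ⟨g, (hT g).mpr ⟨β, β.ne_zero, w, hw, hg⟩⟩
      obtain ⟨c, hcw, hca⟩ := transvection_parameters_unique hsmul₁ hnd β.ne_zero (hv t) hw
        fun x => (h t x).symm.trans (hg x)
      refine ⟨(t, c), Prod.ext (Units.ext ?_) (Subtype.ext hcw.symm)⟩
      simp only [φ, Units.val_mul, Units.val_mk0, Units.val_inv_eq_inv_val,
        Units.val_pow_eq_pow_val, hca]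
      have := c.ne_zero
      field_simp
  have hcard := Fintype.card_of_bijective hbij
  rw [Fintype.card_prod, Fintype.card_prod, mul_comm, Fintype.card_coe] at hcard
  rw [Nat.eq_of_mul_eq_mul_left Fintype.card_pos hcard, Fintype.card_subtype_compl]
  simp

end Transvections

open scoped Classical in
/-- **Proposition (moments of `f_*` for `Sp_{2n}(q)`, `q ≡ 3 (mod 4)`).**  Let
`q ≡ 3 (mod 4)` be an odd prime power, `B` a nondegenerate alternating bilinear form on
`F_q^{2n}` with isometry group `G = Sp_{2n}(q)`, and `Tr ⊆ G` the set of symplectic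
transvections, so `|Tr| = q^{2n} − 1`.  Let `η` be a finite-dimensional complex
representation of `G`, `K` the tensor product Markov chain associated with `η` started at
the trivial representation, and define
`f_*(ρ) = (Σ_{t∈Tr} χ^ρ(t))/(d_ρ·√(q^{2n}−1))`.  Then for all `r, s ≥ 0`,
`E_{K^r}[(f_*)^s] = (q^{2n}−1)^{s/2}·(q^{2n}−1)^{−s}·
   Σ_{(t_1,…,t_s)∈Tr^s} (χ^η(t_1⋯t_s)/d_η)^r`. -/
theorem sp_odd_fstar_moments {F : Type} [Field F] [Fintype F]
    {q n : ℕ} (hq : Fintype.card F = q) (hq3 : q % 4 = 3) (hn : 1 ≤ n)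
    (B : (Fin (2 * n) → F) → (Fin (2 * n) → F) → F)
    (hadd₁ : ∀ x x' y, B (x + x') y = B x y + B x' y)
    (hsmul₁ : ∀ (a : F) (x y : Fin (2 * n) → F), B (a • x) y = a * B x y)
    (hadd₂ : ∀ x y y', B x (y + y') = B x y + B x y')
    (hsmul₂ : ∀ (a : F) (x y : Fin (2 * n) → F), B x (a • y) = a * B x y)
    (halt : ∀ x, B x x = 0)
    (hnd : ∀ x, (∀ y, B x y = 0) → x = 0)
    {ι : Type} [Fintype ι] [DecidableEq ι]
    (rep : ι → FDRep ℂ ↥(formIsometry B))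
    (hsimple : ∀ i, Simple (rep i))
    (hcomplete : ∀ V : FDRep ℂ ↥(formIsometry B), Simple V → ∃ i, Nonempty (V ≅ rep i))
    (hinj : ∀ i j : ι, Nonempty (rep i ≅ rep j) → i = j)
    (triv : ι) (htriv : ∀ g : ↥(formIsometry B), (rep triv).character g = 1)
    (η : FDRep ℂ ↥(formIsometry B))
    (Tr : Finset ↥(formIsometry B))
    (hTr : ∀ g : ↥(formIsometry B), g ∈ Tr ↔
      IsSympTransvection B (g : (Matrix (Fin (2 * n)) (Fin (2 * n)) F)ˣ))
    (r s : ℕ) :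
    Tr.card = q ^ (2 * n) - 1 ∧
    ∑ ρ, ((tensorChain rep η ^ r) triv ρ : ℂ) *
        ((∑ t ∈ Tr, (rep ρ).character t) /
          ((Module.finrank ℂ (rep ρ) : ℂ) *
            (Real.sqrt ((q : ℝ) ^ (2 * n) - 1) : ℝ))) ^ s =
      ((Real.sqrt ((q : ℝ) ^ (2 * n) - 1) ^ s : ℝ) : ℂ) /
          ((((q : ℝ) ^ (2 * n) - 1 : ℝ)) : ℂ) ^ s *
        ∑ t ∈ Fintype.piFinset (fun _ : Fin s => Tr),
          (η.character (List.ofFn t).prod / (Module.finrank ℂ η : ℂ)) ^ r := by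
  have hcard := card_sympTransvections hadd₁ hsmul₁ hadd₂ hsmul₂ halt hnd Tr hTr
  rw [hq] at hcard
  refine ⟨hcard, ?_⟩
  have hconj : ∀ g, ∀ t ∈ Tr, g * t * g⁻¹ ∈ Tr := fun g t ht =>
    (hTr _).mpr (((hTr t).mp ht).conj g)
  set x : ℝ := (q : ℝ) ^ (2 * n) - 1
  have hx0 : 0 < x := sub_pos.mpr (one_lt_pow₀ (by exact_mod_cast (by omega : 1 < q)) (by omega))
  have hsq : ((√x : ℝ) : ℂ) * ((√x : ℝ) : ℂ) = (x : ℂ) := by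
    exact_mod_cast Real.mul_self_sqrt hx0.le
  have hs0 : ((√x : ℝ) : ℂ) ≠ 0 := by
    exact_mod_cast (Real.sqrt_pos.mpr hx0).ne'
  have hdtriv : (Module.finrank ℂ (rep triv) : ℂ) = 1 := by
    rw [← FDRep.char_one, htriv]
  have hscale : ((√x ^ s : ℝ) : ℂ) / (x : ℂ) ^ s = (((√x : ℝ) : ℂ) ^ s)⁻¹ := by
    rw [← hsq, Complex.ofReal_pow, mul_pow]
    field_simp
  rw [hscale]
  calc
    _ = (((√x : ℝ) : ℂ) ^ s)⁻¹ * ∑ ρ, ∑ t ∈ Fintype.piFinset (fun _ : Fin s => Tr),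
          ((tensorChain rep η ^ r) triv ρ : ℂ) *
            ((rep ρ).character (List.ofFn t).prod / (Module.finrank ℂ (rep ρ) : ℂ)) := by
      rw [mul_sum]
      refine sum_congr rfl fun ρ _ => ?_
      rw [← mul_sum, ← FDRep.sum_character_div_pow (rep ρ) Tr hconj s, ← div_div, div_pow]
      ring
    _ = _ := by
      rw [sum_comm]
      congr 1
      refine sum_congr rfl fun t _ => ?_
      rw [sum_tensorChain_pow_mul_character rep hsimple hcomplete hinj, htriv, hdtriv, div_one,
        one_mul]
end
end

section
/- Let q be a prime power, n ≥ 2, and let V = F_{q^2}^n be endowed with a nondegenerate Hermitian form, with isometry group GU(V) ≅ GU_n(q). Set N = (q^n − (−1)^n)(q^{n−1} − (−1)^{n−1}). If T_1, T_2 are two independent uniformly random unitary transvections in GU(V), then the probability that the fixed point subspace ker(T_1T_2 − I) has codimension e in V equals: (q^{2n−1} − (−1)^{n−1}q^n − (−1)^n q^{n−1} − q²)/N if e = 2; (q² − q − 2)/N if e = 1; and (q+1)/N if e = 0. -/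
noncomputable section

/-- `T` is a transvection of `GL(E^m)`: `T = I + v w*` with `v ∈ V`, `w* ∈ V*` nonzero
and `w*(v) = 0`, i.e. `T : y ↦ y + w*(y)·v`. -/
def IsGLTransvection {E : Type} [Field E] {m : ℕ} (T : Matrix (Fin m) (Fin m) E) : Prop :=
  ∃ v : Fin m → E, v ≠ 0 ∧ ∃ w : (Fin m → E) →ₗ[E] E, w ≠ 0 ∧ w v = 0 ∧
    ∀ y, T.mulVec y = y + w y • v

theorem card_pow_eq_of_pow_eq_one {E : Type*} [Field E] [Fintype E] {d m : ℕ}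
    (h : Fintype.card E = d * m + 1) {y : E} (hy : y ^ m = 1) :
    Nat.card {x : E // x ^ d = y} = d := by
  classical
  have hdm : 0 < d * m := by have := Fintype.one_lt_card (α := E); omega
  have : NeZero (d * m) := ⟨hdm.ne'⟩
  have hd : 0 < d := Nat.pos_of_mul_pos_right hdm
  have hm : 0 < m := Nat.pos_of_mul_pos_left hdm
  have hy0 : y ≠ 0 := by
    rintro rfl
    rw [zero_pow hm.ne'] at hy
    exact zero_ne_one hy
  obtain ⟨g, hg⟩ := IsCyclic.exists_generator (α := Eˣ)
  have hord : orderOf g = d * m := by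
    rw [orderOf_eq_card_of_forall_mem_zpowers hg, Nat.card_eq_fintype_card,
      Fintype.card_units, h, Nat.add_sub_cancel]
  have hprim : IsPrimitiveRoot (g : E) (d * m) :=
    IsPrimitiveRoot.coe_units_iff.2 (hord ▸ IsPrimitiveRoot.orderOf g)
  obtain ⟨k, -, hk⟩ := hprim.eq_pow_of_pow_eq_one
    (show y ^ (d * m) = 1 by rw [mul_comm, pow_mul, hy, one_pow])
  have hdvd : d * m ∣ k * m := by
    rw [← hprim.pow_eq_one_iff_dvd, pow_mul, hk, hy]
  obtain ⟨j, rfl⟩ := Nat.dvd_of_mul_dvd_mul_right hm hdvd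
  have hprim' : IsPrimitiveRoot ((g : E) ^ m) d := hprim.pow hdm (mul_comm _ _)
  have hcard := hprim'.card_nthRoots y
  rw [if_pos ⟨(g : E) ^ j, by rw [← pow_mul, mul_comm, hk]⟩] at hcard
  have hnodup := hprim'.nthRoots_nodup hy0
  rw [← Multiset.toFinset_card_of_nodup hnodup, ← Nat.card_eq_finsetCard] at hcard
  refine Eq.trans ?_ hcard
  refine Nat.card_congr (Equiv.subtypeEquivRight fun x => ?_)
  rw [Multiset.mem_toFinset, Polynomial.mem_nthRoots hd]

section Frobenius

variable {E : Type*} [Field E] [Fintype E] {q : ℕ}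

theorem two_le_of_card_eq_sq (hq : Fintype.card E = q ^ 2) : 2 ≤ q := by
  have := Fintype.one_lt_card (α := E)
  rw [hq] at this
  by_contra h
  interval_cases q <;> simp at this

theorem card_eq_succ_mul_pred (hq : Fintype.card E = q ^ 2) :
    Fintype.card E = (q + 1) * (q - 1) + 1 := by
  obtain ⟨r, rfl⟩ := Nat.exists_eq_add_of_le' (two_le_of_card_eq_sq hq)
  rw [hq, show r + 2 - 1 = r + 1 by omega]
  ring

theorem pow_pow_eq_self (hq : Fintype.card E = q ^ 2) (a : E) : (a ^ q) ^ q = a := by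
  rw [← pow_mul, ← sq, ← hq, FiniteField.pow_card]

theorem pow_succ_pow_eq_self (hq : Fintype.card E = q ^ 2) (a : E) :
    (a ^ (q + 1)) ^ q = a ^ (q + 1) := by
  rw [pow_right_comm, pow_succ, pow_pow_eq_self hq, mul_comm, ← pow_succ]

theorem neg_one_pow_eq (hq : Fintype.card E = q ^ 2) : (-1 : E) ^ q = -1 := by
  rcases Nat.even_or_odd q with h | h
  · have := FiniteField.pow_card (-1 : E)
    rw [hq, (h.pow_of_ne_zero two_ne_zero).neg_one_pow] at this
    rw [h.neg_one_pow, ← this]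
  · exact h.neg_one_pow

theorem pow_pred_mul_self (hq : Fintype.card E = q ^ 2) (a : E) : a ^ (q - 1) * a = a ^ q := by
  rw [← pow_succ, Nat.sub_add_cancel (by have := two_le_of_card_eq_sq hq; omega)]

theorem pow_pred_eq_iff (hq : Fintype.card E = q ^ 2) {a : E} (ha : a ≠ 0) (b : E) :
    a ^ (q - 1) = b ↔ a ^ q = b * a := by
  rw [← pow_pred_mul_self hq, mul_left_inj' ha]

/-- The nonzero elements of the `F_q`-line of trace-zero elements of `F_{q²}`. -/
abbrev TraceZero (E : Type*) [Field E] (q : ℕ) : Type _ := {c : E // c ≠ 0 ∧ c + c ^ q = 0}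

/-- Negation on the nonzero trace-zero elements. -/
def TraceZero.neg (hq : Fintype.card E = q ^ 2) (c : TraceZero E q) : TraceZero E q :=
  ⟨-c.1, neg_ne_zero.2 c.2.1, by
    rw [← neg_one_mul, mul_pow, neg_one_pow_eq hq, ← mul_add, c.2.2, mul_zero]⟩

/-- Multiplication of a nonzero trace-zero element by the norm of a nonzero scalar. -/
def TraceZero.mulNorm (hq : Fintype.card E = q ^ 2) (c : TraceZero E q) {a : E} (ha : a ≠ 0) :
    TraceZero E q :=
  ⟨c.1 * a ^ (q + 1), mul_ne_zero c.2.1 (pow_ne_zero _ ha), by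
    rw [mul_pow, pow_succ_pow_eq_self hq, ← add_mul, c.2.2, zero_mul]⟩

theorem card_traceZero (hq : Fintype.card E = q ^ 2) :
    Nat.card (TraceZero E q) = q - 1 := by
  have h2 := two_le_of_card_eq_sq hq
  rw [← card_pow_eq_of_pow_eq_one (E := E) (d := q - 1) (m := q + 1) (y := -1)
    (by rw [mul_comm]; exact card_eq_succ_mul_pred hq)
    (by rw [pow_succ, neg_one_pow_eq hq]; ring)]
  refine Nat.card_congr (Equiv.subtypeEquivRight fun c => ?_)
  by_cases hc : c = 0
  · simp [hc, show q - 1 ≠ 0 by omega]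
  · rw [pow_pred_eq_iff hq hc, neg_one_mul, add_comm, add_eq_zero_iff_eq_neg]
    simp [hc]

theorem card_norm_fiber (hq : Fintype.card E = q ^ 2) {t : E} (ht : t ≠ 0) (htq : t ^ q = t) :
    Nat.card {a : E // a ^ (q + 1) = t} = q + 1 :=
  card_pow_eq_of_pow_eq_one (card_eq_succ_mul_pred hq)
    ((pow_pred_eq_iff hq ht 1).2 (by rw [one_mul, htq]))

theorem exists_add_pow_ne_zero (hq : Fintype.card E = q ^ 2) : ∃ a : E, a + a ^ q ≠ 0 := by
  classical
  by_contra! h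
  have h2 := two_le_of_card_eq_sq hq
  have h1 : Nat.card (TraceZero E q) = q ^ 2 - 1 := by
    rw [← hq, ← Fintype.card_units, ← Nat.card_eq_fintype_card]
    refine Nat.card_congr (Equiv.trans (Equiv.subtypeEquivRight fun c => ?_) unitsEquivNeZero.symm)
    simp [h c]
  rw [card_traceZero hq] at h1
  have : q < q ^ 2 := by nlinarith
  omega

end Frobenius

/-- A nondegenerate Hermitian form over `F_{q²}`, semilinear in its first argument and linear in
its second one. -/
structure IsHermitianForm {E V : Type*} [Field E] [AddCommGroup V] [Module E V] (q : ℕ)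
    (B : V → V → E) : Prop where
  add_left : ∀ x x' y, B (x + x') y = B x y + B x' y
  smul_left : ∀ (a : E) (x y : V), B (a • x) y = a ^ q * B x y
  add_right : ∀ x y y', B x (y + y') = B x y + B x y'
  smul_right : ∀ (a : E) (x y : V), B x (a • y) = a * B x y
  conj : ∀ x y, B y x = B x y ^ q
  nondegenerate : ∀ x, (∀ y, B x y = 0) → x = 0

namespace IsHermitianForm

section Module

variable {E V : Type*} [Field E] [AddCommGroup V] [Module E V] {q : ℕ}
  {B : V → V → E}

/-- The linear functional `B v`. -/
def functional (hB : IsHermitianForm q B) (v : V) : V →ₗ[E] E where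
  toFun := B v
  map_add' := hB.add_right v
  map_smul' a y := hB.smul_right a v y

@[simp]
theorem functional_apply (hB : IsHermitianForm q B) (v y : V) : hB.functional v y = B v y := rfl

theorem functional_eq_zero_iff (hB : IsHermitianForm q B) {v : V} :
    hB.functional v = 0 ↔ v = 0 := by
  refine ⟨fun h => hB.nondegenerate v fun y => ?_, ?_⟩
  · rw [← hB.functional_apply, h, LinearMap.zero_apply]
  · rintro rfl
    ext y
    simpa using hB.add_left 0 0 y

theorem exists_apply_eq_one (hB : IsHermitianForm q B) {v : V} (hv : v ≠ 0) :
    ∃ y, B v y = 1 :=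
  LinearMap.surjective (mt hB.functional_eq_zero_iff.1 hv) 1

variable [Fintype E]

theorem apply_eq_zero_comm (hB : IsHermitianForm q B) {x y : V} (h : B x y = 0)
    (hq : Fintype.card E = q ^ 2) : B y x = 0 := by
  rw [hB.conj x y, h, zero_pow (by have := two_le_of_card_eq_sq hq; omega)]

/-- A nonzero Hermitian space contains an anisotropic vector. -/
theorem exists_apply_self_ne_zero (hB : IsHermitianForm q B) (hq : Fintype.card E = q ^ 2)
    [Nontrivial V] : ∃ v, B v v ≠ 0 := by
  obtain ⟨x, hx⟩ := exists_ne (0 : V)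
  obtain ⟨y, hy⟩ := hB.exists_apply_eq_one hx
  obtain ⟨a, ha⟩ := exists_add_pow_ne_zero hq
  by_contra! h
  apply ha
  have hxy := h (x + a • y)
  rw [hB.add_left, hB.add_right, hB.add_right, h x, h (a • y), hB.conj x (a • y),
    hB.smul_right, hy] at hxy
  simpa using hxy

/-- The restriction of a Hermitian form to the orthogonal complement of an anisotropic vector. -/
theorem restrict (hB : IsHermitianForm q B) (hq : Fintype.card E = q ^ 2) {v : V}
    (hv : B v v ≠ 0) :
    IsHermitianForm q fun x y : LinearMap.ker (hB.functional v) => B (x : V) (y : V) where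
  add_left _ _ _ := hB.add_left _ _ _
  smul_left _ _ _ := hB.smul_left _ _ _
  add_right _ _ _ := hB.add_right _ _ _
  smul_right _ _ _ := hB.smul_right _ _ _
  conj _ _ := hB.conj _ _
  nondegenerate x hx := by
    refine Subtype.ext (hB.nondegenerate x fun y => ?_)
    have hmem : y - (B v y / B v v) • v ∈ LinearMap.ker (hB.functional v) := by
      rw [LinearMap.mem_ker, map_sub, map_smul]
      simp [hv]
    have hxv : B (x : V) v = 0 := hB.apply_eq_zero_comm (LinearMap.mem_ker.1 x.2) hq
    have := hx ⟨_, hmem⟩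
    simp only [← hB.functional_apply, map_sub, map_smul] at this
    simpa [hxv] using this

/-- Orthogonal decomposition with respect to an anisotropic vector. -/
def decomposition (hB : IsHermitianForm q B) {v : V} (hv : B v v ≠ 0) :
    V ≃ E × LinearMap.ker (hB.functional v) where
  toFun x := (B v x / B v v, ⟨x - (B v x / B v v) • v, by
    rw [LinearMap.mem_ker, map_sub, map_smul]
    simp [hv]⟩)
  invFun p := p.1 • v + p.2
  left_inv x := by simp
  right_inv p := by
    have h : B v (p.1 • v + p.2) / B v v = p.1 := by
      have := LinearMap.mem_ker.1 p.2.2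
      rw [functional_apply] at this
      rw [hB.add_right, hB.smul_right, this, add_zero, mul_div_cancel_right₀ _ hv]
    refine Prod.ext h (Subtype.ext ?_)
    simp only [h]
    abel

theorem apply_self_smul_add (hB : IsHermitianForm q B) (hq : Fintype.card E = q ^ 2) {v x : V}
    (hx : B v x = 0) (a : E) :
    B (a • v + x) (a • v + x) = a ^ (q + 1) * B v v + B x x := by
  simp only [hB.add_left, hB.add_right, hB.smul_left, hB.smul_right, hx,
    hB.apply_eq_zero_comm hx hq]
  ring

end Module

/-- The number of isotropic vectors (including zero) of a Hermitian space. -/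
theorem card_isotropic {E : Type*} [Field E] [Fintype E] {q : ℕ} (hq : Fintype.card E = q ^ 2)
    (n : ℕ) : ∀ {V : Type*} [AddCommGroup V] [Module E V] [Module.Finite E V] {B : V → V → E},
      IsHermitianForm q B → Module.finrank E V = n →
      (q : ℝ) * Nat.card {x : V // B x x = 0} =
        (q : ℝ) ^ (2 * n) + (-1) ^ n * ((q : ℝ) ^ (n + 1) - (q : ℝ) ^ n) := by
  classical
  induction n with
  | zero =>
    intro V _ _ _ B hB hV
    have := Module.finrank_zero_iff.1 hV
    have h0 : ∀ x : V, B x x = 0 := fun x => by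
      rw [Subsingleton.elim x 0, ← hB.functional_apply, map_zero]
    have : Nat.card {x : V // B x x = 0} = 1 := by
      rw [Nat.card_eq_one_iff_unique]
      exact ⟨inferInstance, ⟨0, h0 0⟩⟩
    simp [this]
  | succ n ih =>
    intro V _ _ _ B hB hV
    have : Nontrivial V := Module.nontrivial_of_finrank_pos (R := E) (by omega)
    obtain ⟨v, hv⟩ := hB.exists_apply_self_ne_zero hq
    set K := LinearMap.ker (hB.functional v)
    have hfin : Module.finrank E K = n := by
      have hne : hB.functional v ≠ 0 := fun h => hv (by rw [← hB.functional_apply, h]; rfl)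
      have := Module.Dual.finrank_ker_add_one_of_ne_zero (f := hB.functional v) hne
      rw [hV] at this
      exact Nat.succ_injective this
    have hKq := ih (hB.restrict hq hv) hfin
    have : Finite K := Module.finite_of_finite E
    have : Fintype K := Fintype.ofFinite K
    have hKcard : Nat.card K = q ^ (2 * n) := by
      rw [Module.natCard_eq_pow_finrank (K := E), Nat.card_eq_fintype_card, hq, hfin, ← pow_mul]
    have hfib : ∀ k : K, Nat.card {a : E // a ^ (q + 1) * B v v + B (k : V) k = 0} =
        if B (k : V) k = 0 then 1 else q + 1 := by
      intro k
      split_ifs with hk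
      · rw [Nat.card_eq_one_iff_unique]
        refine ⟨⟨fun a b => ?_⟩, ⟨0, by simp [hk]⟩⟩
        have h0 : ∀ c : {a : E // a ^ (q + 1) * B v v + B (k : V) k = 0}, (c : E) = 0 := by
          rintro ⟨c, hc⟩
          rw [hk, add_zero] at hc
          exact (pow_eq_zero_iff (Nat.succ_ne_zero q)).1 ((mul_eq_zero.1 hc).resolve_right hv)
        exact Subtype.ext ((h0 a).trans (h0 b).symm)
      · refine Eq.trans ?_ (card_norm_fiber hq (t := -(B (k : V) k / B v v))
          (neg_ne_zero.2 (div_ne_zero hk hv))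
          (by rw [← neg_one_mul, mul_pow, neg_one_pow_eq hq, div_pow, ← hB.conj, ← hB.conj]))
        refine Nat.card_congr (Equiv.subtypeEquivRight fun a => ?_)
        rw [add_eq_zero_iff_eq_neg, ← eq_div_iff hv, neg_div]
    have hsum : Nat.card {x : V // B x x = 0} =
        ∑ k : K, if B (k : V) k = 0 then 1 else q + 1 := by
      simp only [← hfib]
      rw [← Nat.card_sigma]
      refine Nat.card_congr (Equiv.trans (Equiv.subtypeEquiv
        ((hB.decomposition hv).trans (Equiv.prodComm _ _))
        (q := fun p => p.2 ^ (q + 1) * B v v + B (p.1 : V) p.1 = 0) fun x => ?_) ?_)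
      · obtain ⟨p, rfl⟩ := (hB.decomposition hv).symm.surjective x
        rw [Equiv.trans_apply, Equiv.apply_symm_apply]
        exact Eq.congr_left (hB.apply_self_smul_add hq (LinearMap.mem_ker.1 p.2.2) p.1)
      · exact Equiv.subtypeProdEquivSigmaSubtype
          fun (k : K) (a : E) => a ^ (q + 1) * B v v + B (k : V) k = 0
    have hsum' : (Nat.card {x : V // B x x = 0} : ℝ) + q * Nat.card {k : K // B (k : V) k = 0} =
        (q + 1) * (q : ℝ) ^ (2 * n) := by
      have hle : (Nat.card {x : V // B x x = 0}) + q * Nat.card {k : K // B (k : V) k = 0} =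
          (q + 1) * Nat.card K := by
        rw [hsum, Nat.card_eq_fintype_card, Fintype.card_subtype, Finset.card_filter,
          Finset.mul_sum, ← Finset.sum_add_distrib, Nat.card_eq_fintype_card, mul_comm,
          ← smul_eq_mul, Fintype.card, ← Finset.sum_const]
        refine Finset.sum_congr rfl fun k _ => ?_
        split_ifs <;> ring
      rw [hKcard] at hle
      exact_mod_cast hle
    linear_combination (q : ℝ) * hsum' - (q : ℝ) * hKq

section Transvection

variable {E : Type} [Field E] {q n : ℕ} {B : (Fin n → E) → (Fin n → E) → E}

/-- The matrix of `y ↦ y + c B(v, y) v`. -/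
def transvectionMatrix (hB : IsHermitianForm q B) (v : Fin n → E) (c : E) :
    Matrix (Fin n) (Fin n) E :=
  LinearMap.toMatrix' (LinearMap.id + (c • hB.functional v).smulRight v)

theorem transvectionMatrix_mulVec (hB : IsHermitianForm q B) (v : Fin n → E) (c : E)
    (y : Fin n → E) : (hB.transvectionMatrix v c).mulVec y = y + (c * B v y) • v := by
  rw [← Matrix.toLin'_apply, transvectionMatrix, Matrix.toLin'_toMatrix']
  simp

theorem transvectionMatrix_mul (hB : IsHermitianForm q B) {v : Fin n → E} (hv : B v v = 0)
    (c d : E) :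
    hB.transvectionMatrix v c * hB.transvectionMatrix v d = hB.transvectionMatrix v (c + d) := by
  refine Matrix.ext_of_mulVec_single fun i => ?_
  rw [← Matrix.mulVec_mulVec]
  simp only [transvectionMatrix_mulVec, hB.add_right, hB.smul_right, hv]
  module

theorem transvectionMatrix_zero (hB : IsHermitianForm q B) (v : Fin n → E) :
    hB.transvectionMatrix v 0 = 1 := by
  refine Matrix.ext_of_mulVec_single fun i => ?_
  rw [transvectionMatrix_mulVec, zero_mul, zero_smul, add_zero, Matrix.one_mulVec]

/-- The unitary transvection `y ↦ y + c B(v, y) v`. -/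
def transvection (hB : IsHermitianForm q B) {v : Fin n → E} (hv : B v v = 0) {c : E}
    (hc : c + c ^ q = 0) : formIsometry B :=
  ⟨⟨hB.transvectionMatrix v c, hB.transvectionMatrix v (-c),
    by rw [hB.transvectionMatrix_mul hv, add_neg_cancel, transvectionMatrix_zero],
    by rw [hB.transvectionMatrix_mul hv, neg_add_cancel, transvectionMatrix_zero]⟩, fun x y => by
    simp only [transvectionMatrix_mulVec, hB.add_left, hB.add_right, hB.smul_left, hB.smul_right,
      hv, mul_pow, ← hB.conj v x]
    linear_combination B v y * B x v * hc⟩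

variable (B) in
/-- The nonzero isotropic vectors. -/
abbrev Isotropic : Type := {v : Fin n → E // v ≠ 0 ∧ B v v = 0}

/-- The unitary transvection attached to a nonzero isotropic vector and a nonzero trace-zero
scalar. -/
def ofParam (hB : IsHermitianForm q B) (p : Isotropic B × TraceZero E q) : formIsometry B :=
  hB.transvection p.1.2.2 p.2.2.2

theorem ofParam_mulVec (hB : IsHermitianForm q B) (p : Isotropic B × TraceZero E q)
    (y : Fin n → E) :
    ((hB.ofParam p : (Matrix (Fin n) (Fin n) E)ˣ) : Matrix (Fin n) (Fin n) E).mulVec y =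
      y + (p.2.1 * B p.1.1 y) • p.1.1 :=
  hB.transvectionMatrix_mulVec _ _ _

theorem formIsometry_ext {S T : formIsometry B}
    (h : ∀ y, ((S : (Matrix (Fin n) (Fin n) E)ˣ) : Matrix (Fin n) (Fin n) E).mulVec y =
      ((T : (Matrix (Fin n) (Fin n) E)ˣ) : Matrix (Fin n) (Fin n) E).mulVec y) : S = T :=
  Subtype.ext (Units.ext (Matrix.ext_of_mulVec_single fun _ => h _))

theorem isGLTransvection_ofParam (hB : IsHermitianForm q B) (p : Isotropic B × TraceZero E q) :
    IsGLTransvection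
      ((hB.ofParam p : (Matrix (Fin n) (Fin n) E)ˣ) : Matrix (Fin n) (Fin n) E) := by
  refine ⟨p.1.1, p.1.2.1, p.2.1 • hB.functional p.1.1,
    smul_ne_zero p.2.2.1 (mt hB.functional_eq_zero_iff.1 p.1.2.1), ?_, fun y => ?_⟩
  · simp [p.1.2.2]
  · simp [ofParam_mulVec]

theorem exists_ofParam_eq (hB : IsHermitianForm q B) (hq : q ≠ 0) {T : formIsometry B}
    (hT : IsGLTransvection ((T : (Matrix (Fin n) (Fin n) E)ˣ) : Matrix (Fin n) (Fin n) E)) :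
    ∃ p, hB.ofParam p = T := by
  obtain ⟨v, hv, w, hw, hwv, hTy⟩ := hT
  have hiso : ∀ x y, w y * B x v + w x ^ q * B v y + w x ^ q * w y * B v v = 0 := by
    intro x y
    have := T.2 x y
    rw [hTy, hTy] at this
    simp only [hB.add_left, hB.add_right, hB.smul_left, hB.smul_right] at this
    linear_combination this
  obtain ⟨z, hz⟩ := hB.exists_apply_eq_one hv
  have hzv : B z v = 1 := by rw [hB.conj v z, hz, one_pow]
  obtain ⟨u, hu⟩ := LinearMap.surjective hw 1
  have hvv : B v v = 0 := by
    simpa [hwv, hu, hq] using hiso v u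
  have hwy : ∀ y, w y = -(w z ^ q) * B v y := fun y => by
    have := hiso z y
    rw [hvv, hzv] at this
    linear_combination this
  have hwz : w z = -(w z ^ q) := by simpa [hz] using hwy z
  have hne : w z ≠ 0 := by
    intro h0
    refine hw (LinearMap.ext fun y => ?_)
    rw [hwy, ← hwz, h0, zero_mul, LinearMap.zero_apply]
  refine ⟨(⟨v, hv, hvv⟩, ⟨w z, hne, by linear_combination hwz⟩), formIsometry_ext fun y => ?_⟩
  rw [ofParam_mulVec, hTy]
  change y + (w z * B v y) • v = _
  rw [(hwy y).trans (congrArg (· * B v y) hwz.symm)]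

/-- Two parametrizations of a unitary transvection differ by a scalar. -/
theorem ofParam_eq_iff (hB : IsHermitianForm q B) (p r : Isotropic B × TraceZero E q) :
    hB.ofParam r = hB.ofParam p ↔
      ∃ a : E, r.1.1 = a • p.1.1 ∧ r.2.1 * a ^ (q + 1) = p.2.1 := by
  constructor
  · intro h
    have hy : ∀ y, (r.2.1 * B r.1.1 y) • r.1.1 = (p.2.1 * B p.1.1 y) • p.1.1 := fun y => by
      have := hB.ofParam_mulVec r y
      rw [h, ofParam_mulVec] at this
      exact (add_left_cancel this).symm
    obtain ⟨z, hz⟩ := hB.exists_apply_eq_one r.1.2.1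
    have hr : r.1.1 = (r.2.1⁻¹ * (p.2.1 * B p.1.1 z)) • p.1.1 := by
      rw [mul_smul, ← hy z, hz, mul_one, smul_smul, inv_mul_cancel₀ r.2.2.1, one_smul]
    refine ⟨_, hr, ?_⟩
    generalize r.2.1⁻¹ * (p.2.1 * B p.1.1 z) = a at hr
    obtain ⟨u, hu⟩ := hB.exists_apply_eq_one p.1.2.1
    have hyu := hy u
    rw [hr, hB.smul_left, hu, smul_smul] at hyu
    have : r.2.1 * (a ^ q * 1) * a = p.2.1 * 1 := smul_left_injective E p.1.2.1 hyu
    linear_combination this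
  · rintro ⟨a, ha, hc⟩
    refine formIsometry_ext fun y => ?_
    rw [ofParam_mulVec, ofParam_mulVec, ha, ← hc, hB.smul_left, smul_smul]
    ring_nf

variable [Fintype E]

theorem card_ofParam_fiber (hB : IsHermitianForm q B) (hq : Fintype.card E = q ^ 2)
    (p : Isotropic B × TraceZero E q) :
    Nat.card {r // hB.ofParam r = hB.ofParam p} = q ^ 2 - 1 := by
  classical
  rw [← hq, ← Fintype.card_units, ← Nat.card_eq_fintype_card]
  let scale : Eˣ → {r // hB.ofParam r = hB.ofParam p} := fun a =>
    ⟨(⟨(a : E) • p.1.1, smul_ne_zero a.ne_zero p.1.2.1, by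
        rw [hB.smul_left, hB.smul_right, p.1.2.2]; ring⟩,
      ⟨p.2.1 / (a : E) ^ (q + 1), div_ne_zero p.2.2.1 (pow_ne_zero _ a.ne_zero), by
        rw [div_pow, pow_succ_pow_eq_self hq, ← add_div, p.2.2.2, zero_div]⟩),
      (hB.ofParam_eq_iff _ _).2
        ⟨a, rfl, div_mul_cancel₀ _ (pow_ne_zero _ a.ne_zero)⟩⟩
  refine (Nat.card_congr (Equiv.ofBijective scale ⟨fun a b hab => ?_, fun r => ?_⟩)).symm
  · have h : (a : E) • p.1.1 = (b : E) • p.1.1 :=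
      congrArg (fun r : {r // hB.ofParam r = hB.ofParam p} => r.1.1.1) hab
    exact Units.ext (smul_left_injective E p.1.2.1 h)
  · obtain ⟨a, ha, hc⟩ := (hB.ofParam_eq_iff _ _).1 r.2
    have ha0 : a ≠ 0 := by
      rintro rfl
      exact r.1.1.2.1 (by rw [ha, zero_smul])
    refine ⟨Units.mk0 a ha0, Subtype.ext (Prod.ext (Subtype.ext ha.symm) (Subtype.ext ?_))⟩
    exact (div_eq_iff (pow_ne_zero _ ha0)).2 hc.symm

theorem card_isotropic_ne_zero (hB : IsHermitianForm q B) (hq : Fintype.card E = q ^ 2)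
    (hn : n ≠ 0) :
    (Nat.card (Isotropic B) : ℝ) =
      ((q : ℝ) ^ n - (-1) ^ n) * ((q : ℝ) ^ (n - 1) - (-1) ^ (n - 1)) := by
  classical
  have h := card_isotropic hq n hB (Module.finrank_fin_fun E)
  have hzero : B 0 0 = 0 := by rw [← hB.functional_apply, map_zero]
  have hcard : Nat.card {x : Fin n → E // B x x = 0} = Nat.card (Isotropic B) + 1 := by
    rw [← Finite.card_option]
    refine Nat.card_congr (Equiv.trans (Equiv.optionSubtypeNe
      (⟨0, hzero⟩ : {x : Fin n → E // B x x = 0})).symm (Equiv.optionCongr ?_))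
    exact (Equiv.subtypeEquivRight fun x => not_congr Subtype.ext_iff).trans
      ((Equiv.subtypeSubtypeEquivSubtypeInter _ fun x : Fin n → E => x ≠ 0).trans
        (Equiv.subtypeEquivRight fun x => and_comm))
  have hq0 : (q : ℝ) ≠ 0 := by
    have := two_le_of_card_eq_sq hq
    positivity
  obtain ⟨m, rfl⟩ := Nat.exists_eq_succ_of_ne_zero hn
  rw [hcard] at h
  have hsign : ((-1 : ℝ) ^ m) ^ 2 = 1 := by rw [← pow_mul, mul_comm, pow_mul]; norm_num
  refine mul_left_cancel₀ hq0 ?_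
  push_cast at h
  simp only [Nat.succ_eq_add_one, Nat.add_sub_cancel] at h ⊢
  linear_combination h + q * hsign

theorem card_transvections (hB : IsHermitianForm q B) (hq : Fintype.card E = q ^ 2) :
    Nat.card {T : formIsometry B // IsGLTransvection
      ((T : (Matrix (Fin n) (Fin n) E)ˣ) : Matrix (Fin n) (Fin n) E)} * (q ^ 2 - 1) =
      Nat.card (Isotropic B) * (q - 1) := by
  classical
  rw [← card_traceZero hq, ← Nat.card_prod]
  have e := Equiv.sigmaFiberEquiv fun p : Isotropic B × TraceZero E q =>
    (⟨hB.ofParam p, hB.isGLTransvection_ofParam p⟩ : {T : formIsometry B // IsGLTransvection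
      ((T : (Matrix (Fin n) (Fin n) E)ˣ) : Matrix (Fin n) (Fin n) E)})
  have : Finite (TraceZero E q) := Subtype.finite
  have : Finite (Isotropic B) := Subtype.finite
  have := Fintype.ofFinite {T : formIsometry B // IsGLTransvection
      ((T : (Matrix (Fin n) (Fin n) E)ˣ) : Matrix (Fin n) (Fin n) E)}
  rw [← Nat.card_congr e, Nat.card_sigma, Nat.card_eq_fintype_card, ← smul_eq_mul, Fintype.card,
    ← Finset.sum_const]
  refine Finset.sum_congr rfl fun T _ => ?_
  obtain ⟨p, hp⟩ := hB.exists_ofParam_eq (by have := two_le_of_card_eq_sq hq; omega) T.2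
  rw [← hB.card_ofParam_fiber hq p]
  refine Nat.card_congr (Equiv.subtypeEquivRight fun r => ?_)
  rw [hp]
  exact ⟨fun h => Subtype.ext h, fun h => congrArg Subtype.val h⟩

end Transvection

section FixedSpace

variable {E : Type} [Field E] {q n : ℕ} {B : (Fin n → E) → (Fin n → E) → E}

theorem fixdim_eq_finrank {g : (Matrix (Fin n) (Fin n) E)ˣ} {K : Submodule E (Fin n → E)}
    (h : ∀ x, (g : Matrix (Fin n) (Fin n) E).mulVec x = x ↔ x ∈ K) :
    fixdim g = Module.finrank E K := by
  have hK : LinearMap.ker (Matrix.toLin' ((g : Matrix (Fin n) (Fin n) E) - 1)) = K := by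
    ext x
    rw [← h, LinearMap.mem_ker, Matrix.toLin'_apply, Matrix.sub_mulVec, Matrix.one_mulVec,
      sub_eq_zero]
  rw [fixdim, hK]

theorem fixdim_eq_iff {g : (Matrix (Fin n) (Fin n) E)ˣ} : fixdim g = n ↔ g = 1 := by
  constructor
  · intro h
    have htop : LinearMap.ker (Matrix.toLin' ((g : Matrix (Fin n) (Fin n) E) - 1)) = ⊤ :=
      Submodule.eq_top_of_finrank_eq (by rw [Module.finrank_fin_fun]; exact h)
    rw [LinearMap.ker_eq_top, LinearEquiv.map_eq_zero_iff, sub_eq_zero] at htop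
    exact Units.ext htop
  · rintro rfl
    rw [fixdim_eq_finrank (K := ⊤) (by simp), finrank_top, Module.finrank_fin_fun]

/-- The product of two unitary transvections with the same centre. -/
theorem ofParam_mul_ofParam_mulVec (hB : IsHermitianForm q B) (v : Isotropic B)
    (c d : TraceZero E q) (y : Fin n → E) :
    ((hB.ofParam (v, c) * hB.ofParam (v, d) : formIsometry B) :
      (Matrix (Fin n) (Fin n) E)ˣ).val.mulVec y = y + ((c.1 + d.1) * B v.1 y) • v.1 := by
  rw [← hB.transvectionMatrix_mulVec, ← hB.transvectionMatrix_mul v.2.2]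
  rfl

theorem ofParam_mul_ofParam_eq_one (hB : IsHermitianForm q B) (v : Isotropic B)
    {c d : TraceZero E q} (hcd : c.1 + d.1 = 0) : hB.ofParam (v, c) * hB.ofParam (v, d) = 1 :=
  formIsometry_ext fun y => by
    rw [ofParam_mul_ofParam_mulVec, hcd]
    simp

theorem fixdim_ofParam_mul_ofParam (hB : IsHermitianForm q B) (v : Isotropic B)
    {c d : TraceZero E q} (hcd : c.1 + d.1 ≠ 0) :
    fixdim (hB.ofParam (v, c) * hB.ofParam (v, d) : formIsometry B).1 = n - 1 := by
  rw [fixdim_eq_finrank (K := LinearMap.ker (hB.functional v.1)) fun y => ?_]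
  · have := Module.Dual.finrank_ker_add_one_of_ne_zero (f := hB.functional v.1)
      (mt hB.functional_eq_zero_iff.1 v.2.1)
    rw [Module.finrank_fin_fun] at this
    omega
  · rw [ofParam_mul_ofParam_mulVec, add_eq_left, LinearMap.mem_ker, functional_apply]
    simp [v.2.1, hcd]

theorem ofParam_injective_right (hB : IsHermitianForm q B) (v : Isotropic B) :
    Function.Injective fun c : TraceZero E q => hB.ofParam (v, c) := by
  intro c d h
  obtain ⟨a, ha, hc⟩ := (hB.ofParam_eq_iff _ _).1 h
  have : a = 1 := smul_left_injective E v.2.1 (by simpa using ha.symm)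
  exact Subtype.ext (by simpa [this] using hc)

variable [Fintype E]

theorem linearIndependent_functional (hB : IsHermitianForm q B) (hq : Fintype.card E = q ^ 2)
    {v w : Fin n → E} (h : LinearIndependent E ![v, w]) :
    LinearIndependent E ![hB.functional v, hB.functional w] := by
  have hq0 : q ≠ 0 := by have := two_le_of_card_eq_sq hq; omega
  rw [LinearIndependent.pair_iff] at h ⊢
  intro s t hst
  have hzero : s ^ q • v + t ^ q • w = 0 := by
    refine hB.nondegenerate _ fun y => ?_
    rw [hB.add_left, hB.smul_left, hB.smul_left, pow_pow_eq_self hq, pow_pow_eq_self hq]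
    exact LinearMap.congr_fun hst y
  obtain ⟨hs, ht⟩ := h _ _ hzero
  exact ⟨(pow_eq_zero_iff hq0).1 hs, (pow_eq_zero_iff hq0).1 ht⟩

theorem fixdim_mul_of_linearIndependent (hB : IsHermitianForm q B)
    (hq : Fintype.card E = q ^ 2) {p r : Isotropic B × TraceZero E q}
    (h : LinearIndependent E ![p.1.1, r.1.1]) :
    fixdim (hB.ofParam p * hB.ofParam r : formIsometry B).1 = n - 2 := by
  have hlin := hB.linearIndependent_functional hq h
  rw [fixdim_eq_finrank (K := (Submodule.span E (Set.range
    ![hB.functional p.1.1, hB.functional r.1.1])).dualCoannihilator) fun y => ?_]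
  · have := Subspace.finrank_add_finrank_dualCoannihilator_eq (Submodule.span E (Set.range
      ![hB.functional p.1.1, hB.functional r.1.1]))
    rw [finrank_span_eq_card hlin, Fintype.card_fin, Module.finrank_fin_fun] at this
    omega
  · have hmem : y ∈ (Submodule.span E (Set.range
        ![hB.functional p.1.1, hB.functional r.1.1])).dualCoannihilator ↔
        B p.1.1 y = 0 ∧ B r.1.1 y = 0 := by
      rw [← SetLike.mem_coe, Submodule.coe_dualCoannihilator_span]
      simp [and_comm]
    rw [hmem, Subgroup.coe_mul, Units.val_mul, ← Matrix.mulVec_mulVec, ofParam_mulVec,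
      ofParam_mulVec, add_assoc, add_eq_left, add_comm]
    constructor
    · intro h0
      obtain ⟨h1, h2⟩ := LinearIndependent.pair_iff.1 h _ _ h0
      have hr := (mul_eq_zero.1 h2).resolve_left r.2.2.1
      rw [hr, mul_zero, zero_smul, add_zero] at h1
      exact ⟨(mul_eq_zero.1 h1).resolve_left p.2.2.1, hr⟩
    · rintro ⟨h1, h2⟩
      simp [h1, h2]

/-- A unitary transvection either has the same centre as a given one, or an independent centre. -/
theorem exists_ofParam_eq_or_linearIndependent (hB : IsHermitianForm q B)
    (hq : Fintype.card E = q ^ 2) (p r : Isotropic B × TraceZero E q) :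
    (∃ d, hB.ofParam (p.1, d) = hB.ofParam r) ∨ LinearIndependent E ![p.1.1, r.1.1] := by
  by_cases h : LinearIndependent E ![p.1.1, r.1.1]
  · exact Or.inr h
  · left
    rw [LinearIndependent.pair_iff' p.1.2.1] at h
    push Not at h
    obtain ⟨a, ha⟩ := h
    have ha0 : a ≠ 0 := by
      rintro rfl
      exact r.1.2.1 (by rw [← ha, zero_smul])
    exact ⟨r.2.mulNorm hq ha0,
      ((hB.ofParam_eq_iff (p.1, r.2.mulNorm hq ha0) r).2 ⟨a, ha.symm, rfl⟩).symm⟩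

variable {T : formIsometry B}

theorem card_fixdim_eq (hB : IsHermitianForm q B) (hq : Fintype.card E = q ^ 2)
    (hT : IsGLTransvection T.1.val) :
    Nat.card {S : formIsometry B // IsGLTransvection S.1.val ∧ fixdim (T * S).1 = n - 0} = 1 := by
  obtain ⟨p, rfl⟩ := hB.exists_ofParam_eq (by have := two_le_of_card_eq_sq hq; omega) hT
  rw [Nat.card_eq_one_iff_unique]
  constructor
  · refine ⟨fun S S' => Subtype.ext ?_⟩
    have h := fixdim_eq_iff.1 S.2.2
    have h' := fixdim_eq_iff.1 S'.2.2
    exact mul_left_cancel (Subtype.ext (h.trans h'.symm))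
  · refine ⟨⟨hB.ofParam (p.1, p.2.neg hq), hB.isGLTransvection_ofParam _, ?_⟩⟩
    rw [Nat.sub_zero, fixdim_eq_iff,
      hB.ofParam_mul_ofParam_eq_one p.1 (d := p.2.neg hq) (add_neg_cancel p.2.1)]
    rfl

theorem card_fixdim_eq_sub_one (hB : IsHermitianForm q B) (hq : Fintype.card E = q ^ 2)
    (hn : 2 ≤ n) (hT : IsGLTransvection T.1.val) :
    Nat.card {S : formIsometry B // IsGLTransvection S.1.val ∧ fixdim (T * S).1 = n - 1} =
      q - 2 := by
  classical
  have hq0 : q ≠ 0 := by have := two_le_of_card_eq_sq hq; omega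
  obtain ⟨p, rfl⟩ := hB.exists_ofParam_eq hq0 hT
  let opp : TraceZero E q := p.2.neg hq
  have hopp : ∀ d : TraceZero E q, d ≠ opp ↔ p.2.1 + d.1 ≠ 0 := fun d => by
    rw [Ne, Subtype.ext_iff, add_comm, Ne, add_eq_zero_iff_eq_neg]
    rfl
  have hcard : Nat.card {d : TraceZero E q // d ≠ opp} = q - 2 := by
    have h := card_traceZero hq
    rw [← Nat.card_congr (Equiv.optionSubtypeNe opp), Finite.card_option] at h
    omega
  rw [← hcard]
  let f : {d : TraceZero E q // d ≠ opp} →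
      {S : formIsometry B // IsGLTransvection S.1.val ∧
        fixdim (hB.ofParam p * S).1 = n - 1} := fun d =>
    ⟨hB.ofParam (p.1, d.1), hB.isGLTransvection_ofParam _,
      hB.fixdim_ofParam_mul_ofParam p.1 ((hopp _).1 d.2)⟩
  refine (Nat.card_congr (Equiv.ofBijective f ⟨fun c d h => ?_, ?_⟩)).symm
  · exact Subtype.ext (hB.ofParam_injective_right p.1 (Subtype.ext_iff.1 h))
  · rintro ⟨S, hS, hfix⟩
    obtain ⟨r, rfl⟩ := hB.exists_ofParam_eq hq0 hS
    rcases hB.exists_ofParam_eq_or_linearIndependent hq p r with ⟨d, hd⟩ | hlin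
    · refine ⟨⟨d, (hopp d).2 fun h0 => ?_⟩, Subtype.ext hd⟩
      rw [← hd, fixdim_eq_iff.2 (congrArg Subtype.val
        (hB.ofParam_mul_ofParam_eq_one p.1 h0))] at hfix
      omega
    · rw [hB.fixdim_mul_of_linearIndependent hq hlin] at hfix
      omega

theorem fixdim_mul_mem (hB : IsHermitianForm q B) (hq : Fintype.card E = q ^ 2)
    {S : formIsometry B} (hT : IsGLTransvection T.1.val) (hS : IsGLTransvection S.1.val) :
    fixdim (T * S).1 = n - 0 ∨ fixdim (T * S).1 = n - 1 ∨ fixdim (T * S).1 = n - 2 := by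
  have hq0 : q ≠ 0 := by have := two_le_of_card_eq_sq hq; omega
  obtain ⟨p, rfl⟩ := hB.exists_ofParam_eq hq0 hT
  obtain ⟨r, rfl⟩ := hB.exists_ofParam_eq hq0 hS
  rcases hB.exists_ofParam_eq_or_linearIndependent hq p r with ⟨d, hd⟩ | hlin
  · rw [← hd]
    by_cases h0 : p.2.1 + d.1 = 0
    · exact Or.inl (fixdim_eq_iff.2 (congrArg Subtype.val
        (hB.ofParam_mul_ofParam_eq_one p.1 h0)))
    · exact Or.inr (Or.inl (hB.fixdim_ofParam_mul_ofParam p.1 h0))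
  · exact Or.inr (Or.inr (hB.fixdim_mul_of_linearIndependent hq hlin))

theorem card_fixdim_eq_sub_two (hB : IsHermitianForm q B) (hq : Fintype.card E = q ^ 2)
    (hn : 2 ≤ n) (hT : IsGLTransvection T.1.val) :
    Nat.card {S : formIsometry B // IsGLTransvection S.1.val ∧ fixdim (T * S).1 = n - 2} +
      (q - 1) = Nat.card {S : formIsometry B // IsGLTransvection S.1.val} := by
  classical
  have h2 := two_le_of_card_eq_sq hq
  have h0 := hB.card_fixdim_eq hq hT
  have h1 := hB.card_fixdim_eq_sub_one hq hn hT
  rw [Nat.card_eq_fintype_card, Fintype.card_subtype] at h0 h1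
  rw [Nat.card_eq_fintype_card, Nat.card_eq_fintype_card, Fintype.card_subtype,
    Fintype.card_subtype]
  have hsum := Finset.card_eq_sum_card_fiberwise (t := {n - 0, n - 1, n - 2})
    (f := fun S : formIsometry B => fixdim (T * S).1)
    (s := Finset.univ.filter fun S : formIsometry B => IsGLTransvection S.1.val) (by
      intro S hS
      simpa using hB.fixdim_mul_mem hq hT (by simpa using hS))
  rw [Finset.sum_insert (by simp; omega), Finset.sum_insert (by simp; omega),
    Finset.sum_singleton] at hsum
  simp only [Finset.filter_filter] at hsum
  omega

end FixedSpace

end IsHermitianForm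

theorem card_related_pairs {α : Type*} [Finite α] (P : α → Prop) (R : α → α → Prop) (m : ℕ)
    (h : ∀ t, P t → Nat.card {s // P s ∧ R t s} = m) :
    Nat.card {p : α × α // P p.1 ∧ P p.2 ∧ R p.1 p.2} = Nat.card {t // P t} * m := by
  classical
  have := Fintype.ofFinite {t // P t}
  have e : {p : α × α // P p.1 ∧ P p.2 ∧ R p.1 p.2} ≃
      Σ t : {t // P t}, {s // P s ∧ R t.1 s} :=
    { toFun := fun p => ⟨⟨p.1.1, p.2.1⟩, ⟨p.1.2, p.2.2⟩⟩
      invFun := fun x => ⟨(x.1.1, x.2.1), x.1.2, x.2.2⟩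
      left_inv := fun _ => rfl
      right_inv := fun _ => rfl }
  rw [Nat.card_congr e, Nat.card_sigma, Finset.sum_congr rfl fun (t : {t // P t}) _ => h t.1 t.2]
  simp

/-- **Theorem (product of two transvections in `GU_n(q)`).**  Let `V = F_{q²}^n`, `n ≥ 2`,
carry a nondegenerate Hermitian form `B` with isometry group `GU(V) ≅ GU_n(q)`, and set
`N = (q^n − (−1)^n)(q^{n−1} − (−1)^{n−1})`.  The probability that the product of two
independent uniformly random unitary transvections (transvections of `GL(V)` lying in
`GU(V)`) has fixed point subspace of codimension `e` equals
`(q^{2n−1} − (−1)^{n−1}q^n − (−1)^n q^{n−1} − q²)/N` if `e = 2`,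
`(q² − q − 2)/N` if `e = 1`, and `(q+1)/N` if `e = 0`. -/
theorem gu_transvection_product_probabilities {E : Type} [Field E] [Fintype E]
    {q n : ℕ} (hq : Fintype.card E = q ^ 2) (hn : 2 ≤ n)
    (B : (Fin n → E) → (Fin n → E) → E)
    (hadd₁ : ∀ x x' y, B (x + x') y = B x y + B x' y)
    (hsmul₁ : ∀ (a : E) (x y : Fin n → E), B (a • x) y = a ^ q * B x y)
    (hadd₂ : ∀ x y y', B x (y + y') = B x y + B x y')
    (hsmul₂ : ∀ (a : E) (x y : Fin n → E), B x (a • y) = a * B x y)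
    (hconj : ∀ x y, B y x = (B x y) ^ q)
    (hnd : ∀ x, (∀ y, B x y = 0) → x = 0) :
    ((Nat.card {p : ↥(formIsometry B) × ↥(formIsometry B) //
        IsGLTransvection ((p.1 : (Matrix (Fin n) (Fin n) E)ˣ) : Matrix (Fin n) (Fin n) E) ∧
        IsGLTransvection ((p.2 : (Matrix (Fin n) (Fin n) E)ˣ) : Matrix (Fin n) (Fin n) E) ∧
        fixdim ((p.1 * p.2 : ↥(formIsometry B)) : (Matrix (Fin n) (Fin n) E)ˣ) = n - 2} : ℝ) /
      (Nat.card {T : ↥(formIsometry B) //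
        IsGLTransvection ((T : (Matrix (Fin n) (Fin n) E)ˣ) : Matrix (Fin n) (Fin n) E)} : ℝ) ^ 2 =
      ((q : ℝ) ^ (2 * n - 1) - (-1 : ℝ) ^ (n - 1) * (q : ℝ) ^ n -
          (-1 : ℝ) ^ n * (q : ℝ) ^ (n - 1) - (q : ℝ) ^ 2) /
        (((q : ℝ) ^ n - (-1 : ℝ) ^ n) * ((q : ℝ) ^ (n - 1) - (-1 : ℝ) ^ (n - 1)))) ∧
    ((Nat.card {p : ↥(formIsometry B) × ↥(formIsometry B) //
        IsGLTransvection ((p.1 : (Matrix (Fin n) (Fin n) E)ˣ) : Matrix (Fin n) (Fin n) E) ∧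
        IsGLTransvection ((p.2 : (Matrix (Fin n) (Fin n) E)ˣ) : Matrix (Fin n) (Fin n) E) ∧
        fixdim ((p.1 * p.2 : ↥(formIsometry B)) : (Matrix (Fin n) (Fin n) E)ˣ) = n - 1} : ℝ) /
      (Nat.card {T : ↥(formIsometry B) //
        IsGLTransvection ((T : (Matrix (Fin n) (Fin n) E)ˣ) : Matrix (Fin n) (Fin n) E)} : ℝ) ^ 2 =
      ((q : ℝ) ^ 2 - (q : ℝ) - 2) /
        (((q : ℝ) ^ n - (-1 : ℝ) ^ n) * ((q : ℝ) ^ (n - 1) - (-1 : ℝ) ^ (n - 1)))) ∧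
    ((Nat.card {p : ↥(formIsometry B) × ↥(formIsometry B) //
        IsGLTransvection ((p.1 : (Matrix (Fin n) (Fin n) E)ˣ) : Matrix (Fin n) (Fin n) E) ∧
        IsGLTransvection ((p.2 : (Matrix (Fin n) (Fin n) E)ˣ) : Matrix (Fin n) (Fin n) E) ∧
        fixdim ((p.1 * p.2 : ↥(formIsometry B)) : (Matrix (Fin n) (Fin n) E)ˣ) = n - 0} : ℝ) /
      (Nat.card {T : ↥(formIsometry B) //
        IsGLTransvection ((T : (Matrix (Fin n) (Fin n) E)ˣ) : Matrix (Fin n) (Fin n) E)} : ℝ) ^ 2 =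
      ((q : ℝ) + 1) /
        (((q : ℝ) ^ n - (-1 : ℝ) ^ n) * ((q : ℝ) ^ (n - 1) - (-1 : ℝ) ^ (n - 1)))) := by
  have hB : IsHermitianForm q B := ⟨hadd₁, hsmul₁, hadd₂, hsmul₂, hconj, hnd⟩
  have h2 := two_le_of_card_eq_sq hq
  have hI := hB.card_isotropic_ne_zero hq (by omega)
  have hT := hB.card_transvections hq
  set t := Nat.card {T : formIsometry B // IsGLTransvection T.1.val}
  have hsub : ((q - 1 : ℕ) : ℝ) = q - 1 := by push_cast [show 1 ≤ q by omega]; ring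
  have hqR : (2 : ℝ) ≤ q := by exact_mod_cast h2
  have hpos : ∀ k, k ≠ 0 → 0 < (q : ℝ) ^ k - (-1) ^ k := fun k hk => by
    have h1 : (1 : ℝ) < q ^ k := one_lt_pow₀ (by linarith) hk
    rcases neg_one_pow_eq_or ℝ k with h | h <;> rw [h] <;> linarith
  have hN := mul_pos (hpos n (by omega)) (hpos (n - 1) (by omega))
  have hsign : (-1 : ℝ) ^ n * (-1) ^ (n - 1) = -1 := by
    obtain ⟨m, rfl⟩ := Nat.exists_eq_add_of_le' (show 1 ≤ n by omega)
    rw [Nat.add_sub_cancel, ← pow_add, show m + 1 + m = 2 * m + 1 by ring, pow_succ, pow_mul]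
    norm_num
  have hpow : (q : ℝ) ^ (2 * n - 1) = q ^ n * q ^ (n - 1) := by
    rw [← pow_add]
    congr 1
    omega
  have htN : (t : ℝ) * (q + 1) =
      ((q : ℝ) ^ n - (-1) ^ n) * ((q : ℝ) ^ (n - 1) - (-1) ^ (n - 1)) := by
    have hsq : q ^ 2 - 1 = (q + 1) * (q - 1) := by
      have := card_eq_succ_mul_pred hq
      omega
    have hT' : (t : ℝ) * ((q + 1) * (q - 1 : ℕ)) = Nat.card (IsHermitianForm.Isotropic B) * (q - 1 : ℕ) := by
      rw [hsq] at hT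
      exact_mod_cast hT
    rw [← hI]
    refine mul_right_cancel₀ (b := ((q - 1 : ℕ) : ℝ)) (by rw [hsub]; linarith) ?_
    rw [← hT', mul_assoc]
  have htpos : (0 : ℝ) < t := by
    by_contra! h
    nlinarith
  obtain ⟨T, hTt⟩ : Nonempty {T : formIsometry B // IsGLTransvection T.1.val} :=
    (Nat.card_pos_iff.1 (by exact_mod_cast htpos)).1
  have hle := hB.card_fixdim_eq_sub_two hq hn hTt
  have e0 := card_related_pairs (fun T : formIsometry B => IsGLTransvection T.1.val)
    (fun T S => fixdim (T * S).1 = n - 0) 1 fun _ => hB.card_fixdim_eq hq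
  have e1 := card_related_pairs (fun T : formIsometry B => IsGLTransvection T.1.val)
    (fun T S => fixdim (T * S).1 = n - 1) (q - 2) fun _ => hB.card_fixdim_eq_sub_one hq hn
  have e2 := card_related_pairs (fun T : formIsometry B => IsGLTransvection T.1.val)
    (fun T S => fixdim (T * S).1 = n - 2) (t - (q - 1)) fun _ hS =>
      Nat.eq_sub_of_add_eq (hB.card_fixdim_eq_sub_two hq hn hS)
  have hratio : ∀ (a m : ℕ) (b : ℝ), a = t * m → (m : ℝ) * (q + 1) = b → (a : ℝ) / t ^ 2 =
      b / (((q : ℝ) ^ n - (-1) ^ n) * ((q : ℝ) ^ (n - 1) - (-1) ^ (n - 1))) := by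
    rintro _ m _ rfl rfl
    rw [← htN]
    push_cast
    field_simp
  refine ⟨hratio _ _ _ e2 ?_, hratio _ _ _ e1 ?_, hratio _ _ _ e0 ?_⟩
  · rw [Nat.cast_sub (by omega), hsub, hpow]
    linear_combination htN + hsign
  · push_cast [h2]
    ring
  · push_cast
    ring
end
end
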